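/- Backward uniqueness with L² integrability: if u, v ∈ E([t₁, t₂]) are two solutions of mKdV with u, v ∈ C([t₁, t₂], L²(ℝ)) and u(t₂) = v(t₂), then u ≡ v on [t₁, t₂]. -/

import Mathlib

open MeasureTheory Set Filter Topology

noncomputable section

namespace MKdVPaper

/-- The Japanese bracket `⟨y⟩ = √(1+y²)`. -/
def jap (y : ℝ) : ℝ := Real.sqrt (1 + y ^ 2)

/-- Truncated Fourier-type integral recovering the physical function from a profile `w`:
`(1/π) Re ∫_0^R e^{i(px + p³ t)} w(p) dp`. -/
def physPartial (w : ℝ → ℂ) (t x R : ℝ) : ℝ :=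
  (1 / Real.pi) *
    (∫ p in Ioc (0 : ℝ) R, Complex.exp (Complex.I * ((p * x + p ^ 3 * t : ℝ) : ℂ)) * w p).re

/-- `u` is the physical-space function associated with the profile `w` at time `t`, i.e.
`u(x) = (1/π) Re ∫_0^∞ e^{i(px + p³t)} w(p) dp` as an improper integral. -/
def IsPhys (w : ℝ → ℂ) (t : ℝ) (u : ℝ → ℝ) : Prop :=
  ∀ x : ℝ, Tendsto (fun R => physPartial w t x R) atTop (𝓝 (u x))

/-- Sup norm of a profile. -/
def supN (w : ℝ → ℂ) : ℝ := ⨆ p : ℝ, ‖w p‖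

/-- `L²((0,∞))` norm of the derivative of the profile. -/
def dL2 (w : ℝ → ℂ) : ℝ := (eLpNorm (deriv w) 2 (volume.restrict (Ioi 0))).toReal

/-- The `E(t)` norm: `‖ũ‖_{L^∞} + t^{-1/6} ‖∂_p ũ‖_{L²((0,∞))}`. -/
def EnormP (t : ℝ) (w : ℝ → ℂ) : ℝ := supN w + t ^ (-(1 / 6 : ℝ)) * dL2 w

/-- Membership conditions for `E(t)` on the profile side: profile of a real-valued
distribution, bounded and continuous on `(0,∞)`, with derivative in `L²((0,∞))`. -/
structure MemE (w : ℝ → ℂ) : Prop where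
  symm : ∀ p : ℝ, w (-p) = starRingEnd ℂ (w p)
  cont : ContinuousOn w (Ioi 0)
  bdd : BddAbove (range fun p : ℝ => ‖w p‖)
  diff : ∀ p ∈ Ioi (0 : ℝ), DifferentiableAt ℝ w p
  derivL2 : MemLp (deriv w) 2 (volume.restrict (Ioi 0))

/-- A space-time function of class `E(I)`: a physical function `u` together with its
profile `w(t,p) = e^{-itp³} û(t,p)`. -/
structure ESol (I : Set ℝ) where
  u : ℝ → ℝ → ℝ
  w : ℝ → ℝ → ℂ
  memE : ∀ t ∈ I, MemE (w t)
  isPhys : ∀ t ∈ I, IsPhys (w t) t (u t)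
  contt : ContinuousOn (fun q : ℝ × ℝ => w q.1 q.2) (I ×ˢ Ioi 0)

/-- Finiteness of the `E(I)` norm: `sup_{t ∈ I} ‖u(t)‖_{E(t)} < ∞`. -/
def FiniteEnorm (I : Set ℝ) (sol : ESol I) : Prop :=
  BddAbove ((fun t => EnormP t (sol.w t)) '' I)

/-- Time derivative of a test function. -/
def dt1 (φ : ℝ → ℝ → ℝ) : ℝ → ℝ → ℝ := fun t x => deriv (fun s => φ s x) t

/-- Space derivative of a test function. -/
def dx1 (φ : ℝ → ℝ → ℝ) : ℝ → ℝ → ℝ := fun t x => deriv (fun y => φ t y) x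

/-- `u` is a distributional solution of `∂ₜ u + ∂ₓ³ u + ε ∂ₓ(u³) = 0` on `I × ℝ`. -/
def IsSolOn (ε : ℝ) (u : ℝ → ℝ → ℝ) (I : Set ℝ) : Prop :=
  ∀ φ : ℝ → ℝ → ℝ,
    ContDiff ℝ (⊤ : ℕ∞) (fun q : ℝ × ℝ => φ q.1 q.2) →
    HasCompactSupport (fun q : ℝ × ℝ => φ q.1 q.2) →
    tsupport (fun q : ℝ × ℝ => φ q.1 q.2) ⊆ interior I ×ˢ univ →
    (∫ q : ℝ × ℝ,
      (u q.1 q.2 * (dt1 φ q.1 q.2 + dx1 (dx1 (dx1 φ)) q.1 q.2)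
        + ε * u q.1 q.2 ^ 3 * dx1 φ q.1 q.2)) = 0

/-- Self-similar solution: `S(t,x) = t^{-1/3} V(t^{-1/3} x)`. -/
def SelfSimilar {I : Set ℝ} (S : ESol I) : Prop :=
  ∃ V : ℝ → ℝ, ∀ t ∈ I, ∀ x : ℝ,
    S.u t x = t ^ (-(1 / 3 : ℝ)) * V (t ^ (-(1 / 3 : ℝ)) * x)

/-- The Fourier transform at time 1 recovered from the profile: `û(1,p) = e^{ip³} ũ(1,p)`. -/
def hatAtOne (w : ℝ → ℂ) : ℝ → ℂ := fun p => Complex.exp (Complex.I * ((p ^ 3 : ℝ) : ℂ)) * w p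

/-- The Fourier transforms at time 1 have the same limit at frequency `0⁺`. -/
def SameZeroLimit (w₁ w₂ : ℝ → ℂ) : Prop :=
  ∃ c : ℂ, Tendsto (hatAtOne w₁) (𝓝[>] (0 : ℝ)) (𝓝 c) ∧
    Tendsto (hatAtOne w₂) (𝓝[>] (0 : ℝ)) (𝓝 c)

/-- Truncated Airy–Fock integral. -/
def AiP (z R : ℝ) : ℂ :=
  ((1 / Real.pi : ℝ) : ℂ) *
    ∫ p in Ioc (0 : ℝ) R, Complex.exp (Complex.I * ((p * z + p ^ 3 : ℝ) : ℂ))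

/-- The Airy–Fock function `Ai(z) = (1/π)∫_0^∞ e^{i(pz+p³)} dp` (improper integral). -/
def AiFock (z : ℝ) : ℂ := limUnder atTop fun R => AiP z R

end MKdVPaper
namespace MKdVPaper

/-- `u : I → L²(ℝ)` continuously. -/
def ContInL2 (I : Set ℝ) (u : ℝ → ℝ → ℝ) : Prop :=
  (∀ t ∈ I, MemLp (u t) 2 (volume : Measure ℝ)) ∧
  ∀ t ∈ I, Tendsto (fun s => eLpNorm (fun x => u s x - u t x) 2 (volume : Measure ℝ))
    (𝓝[I] t) (𝓝 0)

/-!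
Write `z = u - v` and `B = u³ - v³ = (u² + uv + v²) z`. Comparing the oscillatory integral that
recovers `u` from its profile with the primitive `(p - p₀) e^{iΦ} / (1 + i (p - p₀) Φ')` gives
`|u| ≲ ⟨x⟩^{-1/4}` and `|∂ₓu| ≲ ⟨x⟩^{1/4}`, so products of two solutions are bounded and Lipschitz
in `x`, uniformly in time. In the energy identity for `z` mollified by an even kernel `g`, the
dispersive term is the quadratic form of the odd kernel `g'''` and vanishes; in the nonlinear term
the odd kernel `g'` antisymmetrises the translations of `B` against `z`, leaving differences of
`u² + uv + v²`, and the bound `C ‖z‖² ∫ |s| |g'(s)| ds` is unchanged when `g` is concentrated at the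
origin. Gronwall's inequality for `‖z‖²` concludes.
-/

/-- The Lorentzian weight `1 / (1 + m (p - c)²)` of height `1` and width `m⁻¹ᐟ²` centred at `c`:
the size of the amplitudes allowed in the stationary phase estimate. -/
def lorentzian (m c p : ℝ) : ℝ := (1 + m * (p - c) ^ 2)⁻¹

section Lorentzian

variable {m c : ℝ}

lemma continuous_lorentzian (hm : 0 ≤ m) : Continuous (lorentzian m c) :=
  Continuous.inv₀ (by fun_prop) fun p => by positivity

lemma integral_lorentzian_le (hm : 0 < m) {a b : ℝ} (hab : a ≤ b) :
    ∫ p in a..b, lorentzian m c p ≤ Real.pi / √m := by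
  have hsm : 0 < √m := Real.sqrt_pos.2 hm
  have rescale : ∀ p : ℝ, lorentzian m c p = (fun y : ℝ => (1 + y ^ 2)⁻¹) (√m * p - √m * c) := by
    intro p
    simp only [lorentzian]
    rw [← mul_sub, mul_pow, Real.sq_sqrt hm.le]
  simp_rw [rescale]
  rw [intervalIntegral.integral_comp_mul_sub (fun y : ℝ => (1 + y ^ 2)⁻¹) hsm.ne',
    intervalIntegral.integral_of_le (by gcongr), smul_eq_mul, div_eq_inv_mul,
    ← integral_univ_inv_one_add_sq]
  exact mul_le_mul_of_nonneg_left (setIntegral_le_integral integrable_inv_one_add_sq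
    (Eventually.of_forall fun y => by positivity)) (by positivity)

lemma abs_sub_mul_lorentzian_le (hm : 0 < m) (p : ℝ) :
    |p - c| * lorentzian m c p ≤ 1 / (2 * √m) := by
  have hsq : √m ^ 2 = m := Real.sq_sqrt hm.le
  rw [lorentzian, ← div_eq_mul_inv, div_le_div_iff₀ (by positivity) (by positivity)]
  nlinarith [sq_nonneg (√m * |p - c| - 1), sq_abs (p - c)]

lemma abs_sub_mul_mul_lorentzian_le (hm : 0 < m) (p y : ℝ) :
    |p - c| * y * lorentzian m c p ≤ lorentzian m c p + y ^ 2 / m := by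
  have hpos : 0 < 1 + m * (p - c) ^ 2 := by positivity
  have key : |p - c| * y ≤ 1 + y ^ 2 / m * (1 + m * (p - c) ^ 2) := by
    have expand : y ^ 2 / m * (1 + m * (p - c) ^ 2) = y ^ 2 / m + (|p - c| * y) ^ 2 := by
      rw [mul_pow, sq_abs]; field_simp
    have : 0 ≤ y ^ 2 / m := by positivity
    nlinarith [sq_nonneg (|p - c| * y - 1), sq_nonneg (|p - c| * y)]
  rw [lorentzian, ← div_eq_mul_inv, div_le_iff₀ hpos, add_mul, inv_mul_cancel₀ hpos.ne']
  exact key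

end Lorentzian

section StationaryPhase

/-- The factor `D(p) = 1 + i (p - c) φ'(p)` by which one divides when integrating by parts near a
possibly degenerate stationary point `c` of the phase `φ`; it never vanishes, whatever `φ'` is. -/
def phaseFactor (φ' : ℝ → ℝ) (c p : ℝ) : ℂ := 1 + Complex.I * (((p - c) * φ' p : ℝ) : ℂ)

/-- `(p - c) e^{iφ(p)} / D(p)`, an approximate primitive of `e^{iφ}`: the derivative of its
numerator is exactly `e^{iφ} D`, with `D` the `phaseFactor`. -/
def phasePrimitive (φ φ' : ℝ → ℝ) (c p : ℝ) : ℂ :=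
  ((p - c : ℝ) : ℂ) * Complex.exp (Complex.I * (φ p : ℂ)) / phaseFactor φ' c p

/-- The defect `e^{iφ} - (d/dp) phasePrimitive`, where `φ''` is the derivative of `φ'`. -/
def phaseDefect (φ φ' φ'' : ℝ → ℝ) (c p : ℝ) : ℂ :=
  ((p - c : ℝ) : ℂ) * (Complex.I * ((φ' p + (p - c) * φ'' p : ℝ) : ℂ)) / phaseFactor φ' c p ^ 2
    * Complex.exp (Complex.I * (φ p : ℂ))

variable {φ φ' φ'' : ℝ → ℝ} {c : ℝ}

lemma norm_exp_I_mul_ofReal (y : ℝ) : ‖Complex.exp (Complex.I * (y : ℂ))‖ = 1 := by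
  rw [mul_comm]; exact Complex.norm_exp_ofReal_mul_I y

lemma one_le_norm_phaseFactor (φ' : ℝ → ℝ) (c p : ℝ) : 1 ≤ ‖phaseFactor φ' c p‖ := by
  have hre : (phaseFactor φ' c p).re = 1 := by
    rw [phaseFactor, Complex.add_re, Complex.one_re, Complex.I_mul_re, Complex.ofReal_im, neg_zero,
      add_zero]
  simpa only [hre, abs_one] using Complex.abs_re_le_norm (phaseFactor φ' c p)

lemma abs_le_norm_phaseFactor (φ' : ℝ → ℝ) (c p : ℝ) :
    |(p - c) * φ' p| ≤ ‖phaseFactor φ' c p‖ := by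
  have him : (phaseFactor φ' c p).im = (p - c) * φ' p := by
    rw [phaseFactor, Complex.add_im, Complex.one_im, Complex.I_mul_im, Complex.ofReal_re, zero_add]
  simpa only [him] using Complex.abs_im_le_norm (phaseFactor φ' c p)

lemma norm_phaseFactor_pos (φ' : ℝ → ℝ) (c p : ℝ) : 0 < ‖phaseFactor φ' c p‖ :=
  one_pos.trans_le (one_le_norm_phaseFactor φ' c p)

lemma phaseFactor_ne_zero (φ' : ℝ → ℝ) (c p : ℝ) : phaseFactor φ' c p ≠ 0 :=
  norm_pos_iff.1 (norm_phaseFactor_pos φ' c p)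

lemma norm_phasePrimitive (φ φ' : ℝ → ℝ) (c p : ℝ) :
    ‖phasePrimitive φ φ' c p‖ = |p - c| / ‖phaseFactor φ' c p‖ := by
  rw [phasePrimitive, norm_div, norm_mul, norm_exp_I_mul_ofReal, Complex.norm_real,
    Real.norm_eq_abs, mul_one]

lemma norm_phaseDefect_le {p : ℝ}
    (hφ : |(p - c) * (φ' p + (p - c) * φ'' p)| ≤ 3 * |(p - c) * φ' p|) :
    ‖phaseDefect φ φ' φ'' c p‖ ≤ 3 / ‖phaseFactor φ' c p‖ := by
  have hD := norm_phaseFactor_pos φ' c p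
  have hnum : |p - c| * |φ' p + (p - c) * φ'' p| ≤ 3 * ‖phaseFactor φ' c p‖ := by
    rw [← abs_mul]
    exact hφ.trans (mul_le_mul_of_nonneg_left (abs_le_norm_phaseFactor φ' c p) three_pos.le)
  rw [phaseDefect, norm_mul, norm_exp_I_mul_ofReal, mul_one, norm_div, norm_mul, norm_mul,
    Complex.norm_real, Complex.norm_real, Complex.norm_I, one_mul, norm_pow, Real.norm_eq_abs,
    Real.norm_eq_abs, div_le_div_iff₀ (pow_pos hD 2) hD]
  nlinarith

lemma continuous_phaseFactor (hφ' : Continuous φ') : Continuous (phaseFactor φ' c) := by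
  unfold phaseFactor; fun_prop

lemma continuous_phasePrimitive (hφ : Continuous φ) (hφ' : Continuous φ') :
    Continuous (phasePrimitive φ φ' c) :=
  Continuous.div (by fun_prop) (continuous_phaseFactor hφ') (phaseFactor_ne_zero φ' c)

lemma continuous_phaseDefect (hφ : Continuous φ) (hφ' : Continuous φ') (hφ'' : Continuous φ'') :
    Continuous (phaseDefect φ φ' φ'' c) :=
  (Continuous.div (by fun_prop) ((continuous_phaseFactor hφ').pow 2)
    fun p => pow_ne_zero 2 (phaseFactor_ne_zero φ' c p)).mul (by fun_prop)

lemma hasDerivAt_phasePrimitive {p : ℝ} (hφ : HasDerivAt φ (φ' p) p)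
    (hφ' : HasDerivAt φ' (φ'' p) p) :
    HasDerivAt (phasePrimitive φ φ' c)
      (Complex.exp (Complex.I * (φ p : ℂ)) - phaseDefect φ φ' φ'' c p) p := by
  have hsub : HasDerivAt (fun p : ℝ => p - c) 1 p := (hasDerivAt_id p).sub_const c
  have hexp : HasDerivAt (fun p => Complex.exp (Complex.I * (φ p : ℂ)))
      (Complex.exp (Complex.I * (φ p : ℂ)) * (Complex.I * (φ' p : ℂ))) p :=
    (hφ.ofReal_comp.const_mul Complex.I).cexp
  have hfactor : HasDerivAt (phaseFactor φ' c)
      (Complex.I * ((φ' p + (p - c) * φ'' p : ℝ) : ℂ)) p := by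
    have h := hsub.mul hφ'
    rw [one_mul] at h
    exact (h.ofReal_comp.const_mul Complex.I).const_add 1
  have hD := phaseFactor_ne_zero φ' c p
  refine ((hsub.ofReal_comp.mul hexp).div hfactor hD).congr_deriv ?_
  have hDdef : Complex.I * (((p - c) * φ' p : ℝ) : ℂ) = phaseFactor φ' c p - 1 := by
    rw [phaseFactor, add_sub_cancel_left]
  simp only [phaseDefect, Pi.mul_apply, Complex.ofReal_one]
  field_simp
  push_cast at hDdef ⊢
  linear_combination phaseFactor φ' c p * hDdef

/-- An amplitude adapted to the phase `φ` with stationary point `c` on `[a, b]`: both `F` and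
`(p - c) F'` are controlled by a Lorentzian times the `phaseFactor`, up to an error `ω` in `F'`
that will only be controlled in `L²`. -/
structure IsPhaseAmplitude (φ' : ℝ → ℝ) (c m κ M a b : ℝ) (ω : ℝ → ℝ) (F F' : ℝ → ℂ) : Prop where
  hasDerivAt : ∀ p ∈ Icc a b, HasDerivAt F (F' p) p
  intervalIntegrable_deriv : IntervalIntegrable F' volume a b
  norm_le : ∀ p ∈ Icc a b, ‖F p‖ ≤ κ * M * lorentzian m c p * ‖phaseFactor φ' c p‖
  norm_deriv_le : ∀ p ∈ Icc a b, |p - c| * ‖F' p‖ ≤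
    κ * lorentzian m c p * ‖phaseFactor φ' c p‖ * (M + |p - c| * ω p)

namespace IsPhaseAmplitude

variable {m κ M a b : ℝ} {ω : ℝ → ℝ} {F F' : ℝ → ℂ}

lemma continuousOn (hF : IsPhaseAmplitude φ' c m κ M a b ω F F') : ContinuousOn F (Icc a b) :=
  fun p hp => (hF.hasDerivAt p hp).continuousAt.continuousWithinAt

lemma integral_exp_mul (hF : IsPhaseAmplitude φ' c m κ M a b ω F F') (hab : a ≤ b)
    (hφ : ∀ p, HasDerivAt φ (φ' p) p) (hφ' : ∀ p, HasDerivAt φ' (φ'' p) p)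
    (hφ'' : Continuous φ'') :
    ∫ p in a..b, Complex.exp (Complex.I * (φ p : ℂ)) * F p
      = phasePrimitive φ φ' c b * F b - phasePrimitive φ φ' c a * F a
        + ∫ p in a..b, (phaseDefect φ φ' φ'' c p * F p - phasePrimitive φ φ' c p * F' p) := by
  have cφ : Continuous φ := continuous_iff_continuousAt.2 fun p => (hφ p).continuousAt
  have cφ' : Continuous φ' := continuous_iff_continuousAt.2 fun p => (hφ' p).continuousAt
  have cdefect : Continuous (phaseDefect φ φ' φ'' c) := continuous_phaseDefect cφ cφ' hφ''
  have cprim' : Continuous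
      fun p => Complex.exp (Complex.I * (φ p : ℂ)) - phaseDefect φ φ' φ'' c p := by fun_prop
  have cF : ContinuousOn F (uIcc a b) := uIcc_of_le hab ▸ hF.continuousOn
  have iprimF' : IntervalIntegrable (fun p => phasePrimitive φ φ' c p * F' p) volume a b :=
    hF.intervalIntegrable_deriv.continuousOn_mul (continuous_phasePrimitive cφ cφ').continuousOn
  have iprim'F : IntervalIntegrable (fun p =>
      (Complex.exp (Complex.I * (φ p : ℂ)) - phaseDefect φ φ' φ'' c p) * F p) volume a b :=
    (cprim'.continuousOn.mul cF).intervalIntegrable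
  have idefect : IntervalIntegrable (fun p => phaseDefect φ φ' φ'' c p * F p
      - phasePrimitive φ φ' c p * F' p) volume a b :=
    (cdefect.continuousOn.mul cF).intervalIntegrable.sub iprimF'
  rw [← intervalIntegral.integral_deriv_mul_eq_sub
    (fun p _ => hasDerivAt_phasePrimitive (hφ p) (hφ' p))
    (fun p hp => hF.hasDerivAt p (uIcc_of_le hab ▸ hp)) (cprim'.intervalIntegrable _ _)
    hF.intervalIntegrable_deriv, ← intervalIntegral.integral_add (iprim'F.add iprimF') idefect]
  exact intervalIntegral.integral_congr fun p _ => by ring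

lemma norm_phasePrimitive_mul_le (hF : IsPhaseAmplitude φ' c m κ M a b ω F F') (hm : 0 < m)
    (hκ : 0 ≤ κ) (hM : 0 ≤ M) {p : ℝ} (hp : p ∈ Icc a b) :
    ‖phasePrimitive φ φ' c p * F p‖ ≤ κ * M / (2 * √m) := by
  have hD := norm_phaseFactor_pos φ' c p
  calc ‖phasePrimitive φ φ' c p * F p‖ = |p - c| / ‖phaseFactor φ' c p‖ * ‖F p‖ := by
        rw [norm_mul, norm_phasePrimitive]
    _ ≤ |p - c| / ‖phaseFactor φ' c p‖
          * (κ * M * lorentzian m c p * ‖phaseFactor φ' c p‖) := by gcongr; exact hF.norm_le p hp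
    _ = κ * M * (|p - c| * lorentzian m c p) := by field_simp
    _ ≤ κ * M * (1 / (2 * √m)) := by gcongr; exact abs_sub_mul_lorentzian_le hm p
    _ = κ * M / (2 * √m) := by ring

lemma norm_remainder_le (hF : IsPhaseAmplitude φ' c m κ M a b ω F F') (hm : 0 < m)
    (hκ : 0 ≤ κ) {p : ℝ} (hp : p ∈ Icc a b)
    (hφ : |(p - c) * (φ' p + (p - c) * φ'' p)| ≤ 3 * |(p - c) * φ' p|) :
    ‖phaseDefect φ φ' φ'' c p * F p - phasePrimitive φ φ' c p * F' p‖
      ≤ κ * ((4 * M + 1) * lorentzian m c p + ω p ^ 2 / m) := by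
  have hD := norm_phaseFactor_pos φ' c p
  have defect_le : ‖phaseDefect φ φ' φ'' c p * F p‖ ≤ 3 * (κ * M * lorentzian m c p) := by
    calc _ ≤ 3 / ‖phaseFactor φ' c p‖
            * (κ * M * lorentzian m c p * ‖phaseFactor φ' c p‖) := by
          rw [norm_mul]; gcongr; exacts [norm_phaseDefect_le hφ, hF.norm_le p hp]
      _ = 3 * (κ * M * lorentzian m c p) := by field_simp
  have primitive_le : ‖phasePrimitive φ φ' c p * F' p‖
      ≤ κ * (M * lorentzian m c p + |p - c| * ω p * lorentzian m c p) := by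
    calc _ = |p - c| * ‖F' p‖ / ‖phaseFactor φ' c p‖ := by
          rw [norm_mul, norm_phasePrimitive]; ring
      _ ≤ κ * lorentzian m c p * ‖phaseFactor φ' c p‖ * (M + |p - c| * ω p)
            / ‖phaseFactor φ' c p‖ := div_le_div_of_nonneg_right (hF.norm_deriv_le p hp) hD.le
      _ = _ := by field_simp
  have weighted : κ * (|p - c| * ω p * lorentzian m c p)
      ≤ κ * (lorentzian m c p + ω p ^ 2 / m) := by
    gcongr; exact abs_sub_mul_mul_lorentzian_le hm p (ω p)
  linarith [norm_sub_le (phaseDefect φ φ' φ'' c p * F p) (phasePrimitive φ φ' c p * F' p)]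

theorem norm_integral_exp_mul_le (hF : IsPhaseAmplitude φ' c m κ M a b ω F F') (hab : a ≤ b)
    (hm : 0 < m) (hκ : 0 ≤ κ) (hM : 0 ≤ M)
    (hφ : ∀ p, HasDerivAt φ (φ' p) p) (hφ' : ∀ p, HasDerivAt φ' (φ'' p) p)
    (hφ'' : Continuous φ'')
    (hφc : ∀ p ∈ Icc a b, |(p - c) * (φ' p + (p - c) * φ'' p)| ≤ 3 * |(p - c) * φ' p|)
    (hω : IntervalIntegrable (fun p => ω p ^ 2) volume a b) {N : ℝ}
    (hN : ∫ p in a..b, ω p ^ 2 ≤ N) :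
    ‖∫ p in a..b, Complex.exp (Complex.I * (φ p : ℂ)) * F p‖
      ≤ κ * ((M + (4 * M + 1) * Real.pi) / √m + N / m) := by
  have iweight : IntervalIntegrable (fun p => (4 * M + 1) * lorentzian m c p) volume a b :=
    ((continuous_lorentzian hm.le).intervalIntegrable _ _).const_mul _
  have remainder_le : ‖∫ p in a..b,
      (phaseDefect φ φ' φ'' c p * F p - phasePrimitive φ φ' c p * F' p)‖
      ≤ κ * ((4 * M + 1) * (Real.pi / √m) + N / m) := by
    refine (intervalIntegral.norm_integral_le_of_norm_le hab
      (Eventually.of_forall fun p hp => hF.norm_remainder_le hm hκ (Ioc_subset_Icc_self hp)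
        (hφc p (Ioc_subset_Icc_self hp)))
      ((iweight.add (hω.div_const _)).const_mul _)).trans ?_
    rw [intervalIntegral.integral_const_mul, intervalIntegral.integral_add iweight
      (hω.div_const _), intervalIntegral.integral_const_mul, intervalIntegral.integral_div]
    gcongr
    exact integral_lorentzian_le hm hab
  have boundary_le := (norm_sub_le (phasePrimitive φ φ' c b * F b) (phasePrimitive φ φ' c a * F a)
    ).trans (add_le_add (hF.norm_phasePrimitive_mul_le hm hκ hM (right_mem_Icc.2 hab))
      (hF.norm_phasePrimitive_mul_le hm hκ hM (left_mem_Icc.2 hab)))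
  rw [hF.integral_exp_mul hab hφ hφ' hφ'']
  refine (norm_add_le _ _).trans ((add_le_add boundary_le remainder_le).trans (le_of_eq ?_))
  field_simp
  ring

end IsPhaseAmplitude

end StationaryPhase

section CubicPhase

/-- The stationary point in `[0, ∞)` of the phase `p ↦ p x + p³ t`. As `Real.sqrt` vanishes on
negative numbers, this is the degenerate point `0` when `x ≥ 0`. -/
def stationaryPoint (t x : ℝ) : ℝ := √(-x / (3 * t))

/-- The frequency scale `√(|x| / 3t)` of the phase `p ↦ p x + p³ t`. -/
def freqScale (t x : ℝ) : ℝ := √(|x| / (3 * t))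

variable {c t x p : ℝ}

lemma freqScale_nonneg (t x : ℝ) : 0 ≤ freqScale t x := Real.sqrt_nonneg _

lemma freqScale_sq (ht : 0 < t) (x : ℝ) : 3 * t * freqScale t x ^ 2 = |x| := by
  rw [freqScale, Real.sq_sqrt (by positivity)]; field_simp

lemma eq_of_stationaryPoint (ht : 0 < t) (x : ℝ) :
    (x = -(3 * t * freqScale t x ^ 2) ∧ stationaryPoint t x = freqScale t x) ∨
      (x = 3 * t * freqScale t x ^ 2 ∧ stationaryPoint t x = 0) := by
  rw [freqScale_sq ht]
  rcases le_total x 0 with hx | hx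
  · exact .inl ⟨by rw [abs_of_nonpos hx, neg_neg], by
      rw [stationaryPoint, freqScale, abs_of_nonpos hx]⟩
  · exact .inr ⟨(abs_of_nonneg hx).symm, Real.sqrt_eq_zero_of_nonpos
      (div_nonpos_of_nonpos_of_nonneg (neg_nonpos.2 hx) (by positivity))⟩

lemma hasDerivAt_cubicPhase (x t p : ℝ) :
    HasDerivAt (fun p => p * x + p ^ 3 * t) (x + 3 * t * p ^ 2) p := by
  refine (((hasDerivAt_id p).mul_const x).add ((hasDerivAt_pow 3 p).mul_const t)).congr_deriv ?_
  push_cast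
  ring

lemma hasDerivAt_deriv_cubicPhase (x t p : ℝ) :
    HasDerivAt (fun p => x + 3 * t * p ^ 2) (6 * t * p) p := by
  refine (((hasDerivAt_pow 2 p).const_mul (3 * t)).const_add x).congr_deriv ?_
  push_cast
  ring

lemma le_freqScale_add_abs_sub (ht : 0 < t) (x p : ℝ) :
    p ≤ freqScale t x + |p - stationaryPoint t x| := by
  have : stationaryPoint t x ≤ freqScale t x := by
    unfold stationaryPoint freqScale
    gcongr
    exact neg_le_abs x
  linarith [le_abs_self (p - stationaryPoint t x)]

lemma sq_mul_le_abs_mul_deriv_cubicPhase (ht : 0 < t) (hp : 0 ≤ p) :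
    t * ((p - stationaryPoint t x) ^ 2 * (freqScale t x + |p - stationaryPoint t x|))
      ≤ |(p - stationaryPoint t x) * (x + 3 * t * p ^ 2)| := by
  have hq := freqScale_nonneg t x
  rcases eq_of_stationaryPoint ht x with ⟨hx, hp₀⟩ | ⟨hx, hp₀⟩ <;> rw [hp₀] <;>
    generalize freqScale t x = q at hq hx ⊢ <;> subst hx
  · have hs : |p - q| ≤ p + q := abs_le.2 ⟨by linarith, by linarith⟩
    have factor : (p - q) * (-(3 * t * q ^ 2) + 3 * t * p ^ 2)
        = t * ((p - q) ^ 2 * (3 * (p + q))) := by ring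
    rw [factor]
    refine le_trans ?_ (le_abs_self _)
    gcongr
    linarith
  · have factor : (p - 0) * (3 * t * q ^ 2 + 3 * t * p ^ 2)
        = t * (p * (3 * (q ^ 2 + p ^ 2))) := by ring
    rw [factor, sub_zero, abs_of_nonneg hp, pow_two p, mul_assoc p]
    refine le_trans ?_ (le_abs_self _)
    gcongr t * (p * ?_)
    nlinarith [sq_nonneg (q - p)]

lemma abs_mul_deriv_phaseFactor_le (ht : 0 < t) (hp : 0 ≤ p) :
    |(p - stationaryPoint t x) * (x + 3 * t * p ^ 2 + (p - stationaryPoint t x) * (6 * t * p))|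
      ≤ 3 * |(p - stationaryPoint t x) * (x + 3 * t * p ^ 2)| := by
  have hq := freqScale_nonneg t x
  rcases eq_of_stationaryPoint ht x with ⟨hx, hp₀⟩ | ⟨hx, hp₀⟩ <;> rw [hp₀] <;>
    generalize freqScale t x = q at hq hx ⊢ <;> subst hx
  · have factor₁ : (p - q) * (-(3 * t * q ^ 2) + 3 * t * p ^ 2)
        = 3 * t * ((p - q) ^ 2 * (p + q)) := by ring
    have factor₂ : (p - q) * (-(3 * t * q ^ 2) + 3 * t * p ^ 2 + (p - q) * (6 * t * p))
        = 3 * t * ((p - q) ^ 2 * (3 * p + q)) := by ring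
    rw [factor₁, factor₂, abs_of_nonneg (by positivity), abs_of_nonneg (by positivity)]
    have : 0 ≤ t * ((p - q) ^ 2 * q) := by positivity
    linarith
  · have factor₁ : (p - 0) * (3 * t * q ^ 2 + 3 * t * p ^ 2)
        = 3 * t * (p * (q ^ 2 + p ^ 2)) := by ring
    have factor₂ : (p - 0) * (3 * t * q ^ 2 + 3 * t * p ^ 2 + (p - 0) * (6 * t * p))
        = 3 * t * (p * (q ^ 2 + 3 * p ^ 2)) := by ring
    rw [factor₁, factor₂, abs_of_nonneg (by positivity), abs_of_nonneg (by positivity)]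
    have : 0 ≤ t * (p * q ^ 2) := by positivity
    linarith

lemma mul_one_add_le_four_mul_phaseFactor (hc : 0 < c) (hc1 : c ≤ 1) (hct : c ≤ t) (hp : 0 ≤ p) :
    c * (1 + (1 + freqScale t x + |p - stationaryPoint t x|) * |p - stationaryPoint t x| ^ 2)
      ≤ 4 * ‖phaseFactor (fun p => x + 3 * t * p ^ 2) (stationaryPoint t x) p‖ := by
  have hq := freqScale_nonneg t x
  have hD := one_le_norm_phaseFactor (fun p => x + 3 * t * p ^ 2) (stationaryPoint t x) p
  have hΘ : c * (|p - stationaryPoint t x| ^ 2 * (freqScale t x + |p - stationaryPoint t x|))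
      ≤ ‖phaseFactor (fun p => x + 3 * t * p ^ 2) (stationaryPoint t x) p‖ := by
    rw [sq_abs]
    exact (mul_le_mul_of_nonneg_right hct (by positivity)).trans
      ((sq_mul_le_abs_mul_deriv_cubicPhase (hc.trans_le hct) hp).trans
        (abs_le_norm_phaseFactor (fun p => x + 3 * t * p ^ 2) _ _))
  have hs := abs_nonneg (p - stationaryPoint t x)
  generalize |p - stationaryPoint t x| = s at *
  generalize freqScale t x = q at *
  have hcube : s ^ 2 ≤ 1 + s ^ 3 := by
    rcases le_total s 1 with h | h
    · nlinarith [pow_nonneg hs 3]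
    · nlinarith [pow_nonneg hs 2]
  have : c * (1 + (1 + q + s) * s ^ 2) ≤ c * (2 + 2 * (s ^ 2 * (q + s))) :=
    mul_le_mul_of_nonneg_left (by nlinarith [mul_nonneg (pow_nonneg hs 2) hq]) hc.le
  linarith

lemma one_le_lorentzian_mul_phaseFactor (hc : 0 < c) (hc1 : c ≤ 1) (hct : c ≤ t) (hp : 0 ≤ p) :
    1 ≤ 8 / c * lorentzian (1 + freqScale t x) (stationaryPoint t x) p
      * ‖phaseFactor (fun p => x + 3 * t * p ^ 2) (stationaryPoint t x) p‖ := by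
  have hq := freqScale_nonneg t x
  have hD := mul_one_add_le_four_mul_phaseFactor (x := x) hc hc1 hct hp
  rw [lorentzian, ← sq_abs]
  have hs := abs_nonneg (p - stationaryPoint t x)
  generalize |p - stationaryPoint t x| = s at *
  generalize ‖phaseFactor _ _ _‖ = D at *
  have regroup : 8 / c * (1 + (1 + freqScale t x) * s ^ 2)⁻¹ * D
      = 2 * (4 * D) / (c * (1 + (1 + freqScale t x) * s ^ 2)) := by field_simp; ring
  rw [regroup, le_div_iff₀ (by positivity), one_mul]
  refine le_trans ?_ (mul_le_mul_of_nonneg_left hD two_pos.le)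
  nlinarith [mul_nonneg hc.le (pow_nonneg hs 3), mul_nonneg hc.le
    (mul_nonneg (add_nonneg zero_le_one hq) (pow_nonneg hs 2))]

lemma one_add_freqScale_add_le (hc : 0 < c) (hc1 : c ≤ 1) (hct : c ≤ t) (hp : 0 ≤ p) :
    1 + freqScale t x + |p - stationaryPoint t x|
      ≤ 8 / c * (1 + freqScale t x) * lorentzian (1 + freqScale t x) (stationaryPoint t x) p
        * ‖phaseFactor (fun p => x + 3 * t * p ^ 2) (stationaryPoint t x) p‖ := by
  have hq := freqScale_nonneg t x
  have hD := mul_one_add_le_four_mul_phaseFactor (x := x) hc hc1 hct hp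
  rw [lorentzian, ← sq_abs]
  have hs := abs_nonneg (p - stationaryPoint t x)
  generalize |p - stationaryPoint t x| = s at *
  generalize ‖phaseFactor _ _ _‖ = D at *
  have hQ : 1 ≤ 1 + freqScale t x := by linarith
  generalize 1 + freqScale t x = Q at *
  have regroup : 8 / c * Q * (1 + Q * s ^ 2)⁻¹ * D
      = 2 * Q * (4 * D) / (c * (1 + Q * s ^ 2)) := by field_simp; ring
  rw [regroup, le_div_iff₀ (by positivity)]
  refine le_trans ?_ (mul_le_mul_of_nonneg_left hD (by positivity))
  have hsQ : s ≤ Q + Q ^ 2 * s ^ 2 := by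
    nlinarith [sq_nonneg (s - 1), mul_nonneg (sub_nonneg.2 hQ) (pow_nonneg hs 2),
      mul_nonneg (mul_nonneg (zero_le_one.trans hQ) (sub_nonneg.2 hQ)) (pow_nonneg hs 2)]
  have : (Q + s) * (1 + Q * s ^ 2) ≤ 2 * Q * (1 + (Q + s) * s ^ 2) := by
    nlinarith [mul_nonneg (zero_le_one.trans hQ) (pow_nonneg hs 3)]
  calc (Q + s) * (c * (1 + Q * s ^ 2)) = c * ((Q + s) * (1 + Q * s ^ 2)) := by ring
    _ ≤ c * (2 * Q * (1 + (Q + s) * s ^ 2)) := by gcongr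
    _ = 2 * Q * (c * (1 + (Q + s) * s ^ 2)) := by ring

end CubicPhase

section BoundedProfile

/-- A profile of class `E(t)` whose sup norm and whose squared `L²` norm of the derivative are at
most `A`. -/
structure IsBoundedProfile (A : ℝ) (w : ℝ → ℂ) : Prop extends MemE w where
  norm_le : ∀ p, ‖w p‖ ≤ A
  dL2_sq_le : dL2 w ^ 2 ≤ A

/-- The constant in the dispersive estimates for profiles bounded by `A` at times at least `c`. -/
def dispConst (c A : ℝ) : ℝ := 8 / c * (A + (4 * A + 1) * Real.pi + A)

lemma dispConst_nonneg {c A : ℝ} (hc : 0 < c) (hA : 0 ≤ A) : 0 ≤ dispConst c A := by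
  unfold dispConst; positivity

lemma integral_norm_sq_eq_eLpNorm_sq {α : Type*} [MeasurableSpace α] {μ : Measure α} {f : α → ℂ}
    (hf : MemLp f 2 μ) : ∫ p, ‖f p‖ ^ 2 ∂μ = (eLpNorm f 2 μ).toReal ^ 2 := by
  have : 0 ≤ ∫ p, ‖f p‖ ^ 2 ∂μ := integral_nonneg fun p => sq_nonneg _
  rw [hf.eLpNorm_eq_integral_rpow_norm two_ne_zero ENNReal.ofNat_ne_top,
    ENNReal.toReal_ofReal (by positivity), ← Real.rpow_natCast, ← Real.rpow_mul (by positivity)]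
  simp

lemma norm_setIntegral_Ioc_le_of_forall_interval {E : Type*} [NormedAddCommGroup E]
    [NormedSpace ℝ E] {F : ℝ → E} {l r C : ℝ} (hlr : l < r) (hF : IntegrableOn F (Ioc l r))
    (h : ∀ a ∈ Ioc l r, ‖∫ p in a..r, F p‖ ≤ C) : ‖∫ p in Ioc l r, F p‖ ≤ C := by
  have cont : ContinuousOn (fun a => ∫ p in a..r, F p) (Icc l r) := by
    rw [← uIcc_of_le hlr.le]
    exact intervalIntegral.continuousOn_primitive_interval_left
      (by rwa [uIcc_of_le hlr.le, integrableOn_Icc_iff_integrableOn_Ioc])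
  rw [← intervalIntegral.integral_of_le hlr.le]
  have lim := (cont l (left_mem_Icc.2 hlr.le)).norm.mono_left
    (nhdsWithin_mono l Ioc_subset_Icc_self)
  have : (𝓝[Ioc l r] l).NeBot := by
    rw [nhdsWithin_Ioc_eq_nhdsGT hlr]; infer_instance
  exact le_of_tendsto lim (eventually_mem_nhdsWithin.mono h)

lemma MemE.integrableOn_mul {w : ℝ → ℂ} (hw : MemE w) {f : ℝ → ℂ} (hf : Continuous f) (R : ℝ) :
    IntegrableOn (fun p => f p * w p) (Ioc 0 R) := by
  obtain ⟨M, hM⟩ := hw.bdd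
  refine Integrable.mul_bdd (c := M) ?_ ?_ (Eventually.of_forall fun p => hM ⟨p, rfl⟩)
  · exact hf.integrableOn_Icc.mono_set Ioc_subset_Icc_self
  · exact (hw.cont.mono Ioc_subset_Ioi_self).aestronglyMeasurable measurableSet_Ioc

lemma FiniteEnorm.exists_isBoundedProfile {t₁ t₂ : ℝ} (ht₁ : 0 < t₁) {S : ESol (Icc t₁ t₂)}
    (h : FiniteEnorm (Icc t₁ t₂) S) : ∃ A, ∀ t ∈ Icc t₁ t₂, IsBoundedProfile A (S.w t) := by
  obtain ⟨K, hK⟩ := h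
  refine ⟨max K ((K / t₂ ^ (-(1 / 6 : ℝ))) ^ 2), fun t ht =>
    ⟨S.memE t ht, fun p => le_max_of_le_left ?_, le_max_of_le_right ?_⟩⟩
  all_goals
    have hKt : supN (S.w t) + t ^ (-(1 / 6 : ℝ)) * dL2 (S.w t) ≤ K := hK ⟨t, ht, rfl⟩
    have hsup : ∀ p, ‖S.w t p‖ ≤ supN (S.w t) := le_ciSup (S.memE t ht).bdd
    have hd : 0 ≤ dL2 (S.w t) := ENNReal.toReal_nonneg
    have ht0 : 0 < t := ht₁.trans_le ht.1
    have : 0 < t ^ (-(1 / 6 : ℝ)) := Real.rpow_pos_of_pos ht0 _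
  · have : 0 ≤ t ^ (-(1 / 6 : ℝ)) * dL2 (S.w t) := by positivity
    linarith [hsup p]
  · have hpow : t₂ ^ (-(1 / 6 : ℝ)) ≤ t ^ (-(1 / 6 : ℝ)) :=
      Real.rpow_le_rpow_of_nonpos ht0 ht.2 (by norm_num)
    refine pow_le_pow_left₀ hd ((le_div_iff₀ (Real.rpow_pos_of_pos (ht0.trans_le ht.2) _)).2 ?_) 2
    calc dL2 (S.w t) * t₂ ^ (-(1 / 6 : ℝ)) ≤ dL2 (S.w t) * t ^ (-(1 / 6 : ℝ)) := by gcongr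
      _ ≤ K := by linarith [(norm_nonneg _).trans (hsup 0)]

namespace IsBoundedProfile

variable {A c t : ℝ} {w : ℝ → ℂ}

lemma nonneg (hw : IsBoundedProfile A w) : 0 ≤ A := (norm_nonneg _).trans (hw.norm_le 0)

lemma mono {B : ℝ} (hw : IsBoundedProfile A w) (hAB : A ≤ B) : IsBoundedProfile B w :=
  ⟨hw.toMemE, fun p => (hw.norm_le p).trans hAB, hw.dL2_sq_le.trans hAB⟩

section Interval

variable {a R : ℝ}

lemma hasDerivAt (hw : IsBoundedProfile A w) {p : ℝ} (hp : 0 < p) : HasDerivAt w (deriv w p) p :=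
  (hw.diff p hp).hasDerivAt

lemma intervalIntegrable_deriv (hw : IsBoundedProfile A w) (ha : 0 < a) (haR : a ≤ R) :
    IntervalIntegrable (deriv w) volume a R :=
  (intervalIntegrable_iff_integrableOn_Ioc_of_le haR).2
    ((hw.derivL2.mono_measure (Measure.restrict_mono (fun _ hp => ha.trans hp.1) le_rfl)).integrable
      one_le_two)

lemma intervalIntegrable_norm_deriv_sq (hw : IsBoundedProfile A w) (ha : 0 < a) (haR : a ≤ R) :
    IntervalIntegrable (fun p => ‖deriv w p‖ ^ 2) volume a R :=
  (intervalIntegrable_iff_integrableOn_Ioc_of_le haR).2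
    (IntegrableOn.mono_set (hw.derivL2.integrable_norm_pow two_ne_zero)
      fun _ hp => ha.trans hp.1)

lemma integral_norm_deriv_sq_le (hw : IsBoundedProfile A w) (ha : 0 < a) (haR : a ≤ R) :
    ∫ p in a..R, ‖deriv w p‖ ^ 2 ≤ A := by
  have hsub : Ioc a R ⊆ Ioi 0 := fun _ hp => ha.trans hp.1
  rw [intervalIntegral.integral_of_le haR]
  refine (setIntegral_mono_set (hw.derivL2.integrable_norm_pow two_ne_zero)
    (Eventually.of_forall fun p => sq_nonneg _) hsub.eventuallyLE).trans ?_
  rw [integral_norm_sq_eq_eLpNorm_sq hw.derivL2]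
  exact hw.dL2_sq_le

lemma isPhaseAmplitude (hw : IsBoundedProfile A w) (hc : 0 < c) (hc1 : c ≤ 1) (hct : c ≤ t)
    (ha : 0 < a) (haR : a ≤ R) (x : ℝ) :
    IsPhaseAmplitude (fun p => x + 3 * t * p ^ 2) (stationaryPoint t x) (1 + freqScale t x)
      (8 / c) A a R (fun p => ‖deriv w p‖) w (deriv w) := by
  refine ⟨fun p hp => hw.hasDerivAt (ha.trans_le hp.1), hw.intervalIntegrable_deriv ha haR,
    fun p hp => ?_, fun p hp => ?_⟩
  all_goals
    have hA := hw.nonneg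
    have key := one_le_lorentzian_mul_phaseFactor (x := x) hc hc1 hct (ha.le.trans hp.1)
  · linarith [mul_le_mul_of_nonneg_right key hA, hw.norm_le p]
  · exact (le_add_of_nonneg_left hA).trans (le_mul_of_one_le_left (by positivity) key)

lemma isPhaseAmplitude_mul (hw : IsBoundedProfile A w) (hc : 0 < c) (hc1 : c ≤ 1) (hct : c ≤ t)
    (ha : 0 < a) (haR : a ≤ R) (x : ℝ) :
    IsPhaseAmplitude (fun p => x + 3 * t * p ^ 2) (stationaryPoint t x) (1 + freqScale t x)
      (8 / c * (1 + freqScale t x)) A a R (fun p => ‖deriv w p‖) (fun p => p * w p)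
      (fun p => 1 * w p + p * deriv w p) := by
  have hderiv : ∀ p ∈ Icc a R,
      HasDerivAt (fun p : ℝ => (p : ℂ) * w p) (1 * w p + p * deriv w p) p := fun p hp =>
    (hasDerivAt_id p).ofReal_comp.mul (hw.hasDerivAt (ha.trans_le hp.1))
  have hcont : ContinuousOn w (uIcc a R) :=
    hw.cont.mono fun p hp => ha.trans_le (uIcc_of_le haR ▸ hp).1
  refine ⟨hderiv, (continuousOn_const.mul hcont).intervalIntegrable.add
    ((hw.intervalIntegrable_deriv ha haR).continuousOn_mul Complex.continuous_ofReal.continuousOn),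
    fun p hp => ?_, fun p hp => ?_⟩
  all_goals
    have hA := hw.nonneg
    have hp0 : 0 ≤ p := ha.le.trans hp.1
    have key := one_add_freqScale_add_le (x := x) hc hc1 hct hp0
    have hq := freqScale_nonneg t x
    have hs := abs_nonneg (p - stationaryPoint t x)
    have hle := le_freqScale_add_abs_sub (hc.trans_le hct) x p
    have hwp := hw.norm_le p
  · rw [norm_mul, Complex.norm_real, Real.norm_of_nonneg hp0]
    calc p * ‖w p‖ ≤ (1 + freqScale t x + |p - stationaryPoint t x|) * A := by gcongr; linarith
      _ ≤ _ := by linarith [mul_le_mul_of_nonneg_right key hA]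
  · calc |p - stationaryPoint t x| * ‖1 * w p + p * deriv w p‖
        ≤ |p - stationaryPoint t x| * (A + p * ‖deriv w p‖) := by
          gcongr
          refine (norm_add_le _ _).trans (add_le_add (by rwa [one_mul]) ?_)
          rw [norm_mul, Complex.norm_real, Real.norm_of_nonneg hp0]
      _ ≤ (1 + freqScale t x + |p - stationaryPoint t x|)
            * (A + |p - stationaryPoint t x| * ‖deriv w p‖) := by
          nlinarith [mul_nonneg hs (norm_nonneg (deriv w p))]
      _ ≤ _ := mul_le_mul_of_nonneg_right key (by positivity)

lemma norm_intervalIntegral_le (hw : IsBoundedProfile A w) (ht : 0 < t) (ha : 0 < a) (haR : a ≤ R)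
    {κ x : ℝ} (hκ : 0 ≤ κ) {F F' : ℝ → ℂ}
    (hF : IsPhaseAmplitude (fun p => x + 3 * t * p ^ 2) (stationaryPoint t x) (1 + freqScale t x)
      κ A a R (fun p => ‖deriv w p‖) F F') :
    ‖∫ p in a..R, Complex.exp (Complex.I * ((p * x + p ^ 3 * t : ℝ) : ℂ)) * F p‖
      ≤ κ * ((A + (4 * A + 1) * Real.pi + A) / √(1 + freqScale t x)) := by
  have hA := hw.nonneg
  have hm : 1 ≤ 1 + freqScale t x := le_add_of_nonneg_right (freqScale_nonneg t x)
  refine (hF.norm_integral_exp_mul_le (φ'' := fun p => 6 * t * p) haR (by linarith) hκ hA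
    (hasDerivAt_cubicPhase x t) (hasDerivAt_deriv_cubicPhase x t) (by fun_prop)
    (fun p hp => abs_mul_deriv_phaseFactor_le ht (ha.le.trans hp.1))
    (hw.intervalIntegrable_norm_deriv_sq ha haR) (hw.integral_norm_deriv_sq_le ha haR)).trans ?_
  rw [add_div _ A]
  gcongr
  exact Real.sqrt_le_iff.2 ⟨by linarith, by nlinarith⟩

end Interval

lemma norm_integral_exp_mul_le (hw : IsBoundedProfile A w) (hc : 0 < c) (hc1 : c ≤ 1)
    (hct : c ≤ t) (x R : ℝ) :
    ‖∫ p in Ioc (0 : ℝ) R, Complex.exp (Complex.I * ((p * x + p ^ 3 * t : ℝ) : ℂ)) * w p‖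
      ≤ dispConst c A / √(1 + freqScale t x) := by
  rcases le_or_gt R 0 with hR | hR
  · rw [Ioc_eq_empty hR.not_gt, Measure.restrict_empty, integral_zero_measure, norm_zero]
    exact div_nonneg (dispConst_nonneg hc hw.nonneg) (Real.sqrt_nonneg _)
  refine norm_setIntegral_Ioc_le_of_forall_interval hR (hw.integrableOn_mul (by fun_prop) R)
    fun a ha => ?_
  rw [dispConst, mul_div_assoc]
  exact hw.norm_intervalIntegral_le (hc.trans_le hct) ha.1 ha.2 (by positivity)
    (hw.isPhaseAmplitude hc hc1 hct ha.1 ha.2 x)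

lemma norm_integral_exp_mul_mul_le (hw : IsBoundedProfile A w) (hc : 0 < c) (hc1 : c ≤ 1)
    (hct : c ≤ t) (x R : ℝ) :
    ‖∫ p in Ioc (0 : ℝ) R, Complex.exp (Complex.I * ((p * x + p ^ 3 * t : ℝ) : ℂ)) * (p * w p)‖
      ≤ dispConst c A * √(1 + freqScale t x) := by
  rcases le_or_gt R 0 with hR | hR
  · rw [Ioc_eq_empty hR.not_gt, Measure.restrict_empty, integral_zero_measure, norm_zero]
    exact mul_nonneg (dispConst_nonneg hc hw.nonneg) (Real.sqrt_nonneg _)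
  have hm : 0 < 1 + freqScale t x := by linarith [freqScale_nonneg t x]
  have hint : IntegrableOn (fun p : ℝ =>
      Complex.exp (Complex.I * ((p * x + p ^ 3 * t : ℝ) : ℂ)) * (p * w p)) (Ioc 0 R) := by
    simp_rw [← mul_assoc]
    exact hw.integrableOn_mul (by fun_prop) R
  refine norm_setIntegral_Ioc_le_of_forall_interval hR hint fun a ha => ?_
  refine (hw.norm_intervalIntegral_le (hc.trans_le hct) ha.1 ha.2 (by positivity)
    (hw.isPhaseAmplitude_mul hc hc1 hct ha.1 ha.2 x)).trans (le_of_eq ?_)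
  rw [dispConst]
  nth_rewrite 1 [← Real.sq_sqrt hm.le]
  have := Real.sqrt_pos.2 hm
  field_simp

end IsBoundedProfile

end BoundedProfile

section Phys

/-- The derivative in `x` of `physPartial w t x R`. -/
def physPartialDeriv (w : ℝ → ℂ) (t x R : ℝ) : ℝ :=
  (1 / Real.pi) * (∫ p in Ioc (0 : ℝ) R,
    Complex.exp (Complex.I * ((p * x + p ^ 3 * t : ℝ) : ℂ)) * (Complex.I * p) * w p).re

lemma MemE.hasDerivAt_physPartial {w : ℝ → ℂ} (hw : MemE w) (t x R : ℝ) :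
    HasDerivAt (fun x => physPartial w t x R) (physPartialDeriv w t x R) x := by
  obtain ⟨M, hM⟩ := hw.bdd
  have hM : ∀ p, ‖w p‖ ≤ M := fun p => hM ⟨p, rfl⟩
  have key := hasDerivAt_integral_of_dominated_loc_of_deriv_le
    (μ := volume.restrict (Ioc (0 : ℝ) R)) (x₀ := x) (s := univ)
    (F := fun x p => Complex.exp (Complex.I * ((p * x + p ^ 3 * t : ℝ) : ℂ)) * w p)
    (F' := fun x p => Complex.exp (Complex.I * ((p * x + p ^ 3 * t : ℝ) : ℂ))
      * (Complex.I * p) * w p) (bound := fun _ => R * M) univ_mem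
    (Eventually.of_forall fun y => (hw.integrableOn_mul (by fun_prop) R).aestronglyMeasurable)
    (hw.integrableOn_mul (by fun_prop) R)
    (hw.integrableOn_mul (by fun_prop) R).aestronglyMeasurable
    ?_ (integrable_const _) ?_
  · exact (Complex.reCLM.hasFDerivAt.comp_hasDerivAt x key.2).const_mul (1 / Real.pi)
  · filter_upwards [ae_restrict_mem measurableSet_Ioc] with p hp y _
    rw [norm_mul, norm_mul, norm_exp_I_mul_ofReal, norm_mul, Complex.norm_I, Complex.norm_real,
      Real.norm_of_nonneg hp.1.le, one_mul, one_mul]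
    exact mul_le_mul hp.2 (hM p) (norm_nonneg _) (hp.1.le.trans hp.2)
  · refine Eventually.of_forall fun p y _ => ?_
    have hphase : HasDerivAt (fun y : ℝ => p * y + p ^ 3 * t) p y := by
      simpa using ((hasDerivAt_id y).const_mul p).add_const (p ^ 3 * t)
    exact (hphase.ofReal_comp.const_mul Complex.I).cexp.mul_const (w p)

lemma abs_inv_pi_mul_re_le (z : ℂ) : |1 / Real.pi * z.re| ≤ ‖z‖ := by
  have hpi : |1 / Real.pi| ≤ 1 := by
    rw [abs_of_pos (by positivity), div_le_one Real.pi_pos]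
    linarith [Real.pi_gt_three]
  rw [abs_mul]
  exact (mul_le_of_le_one_left (abs_nonneg _) hpi).trans (Complex.abs_re_le_norm z)

variable {A c t : ℝ} {w w₂ : ℝ → ℂ} {u v : ℝ → ℝ}

lemma IsBoundedProfile.abs_physPartial_le (hw : IsBoundedProfile A w) (hc : 0 < c) (hc1 : c ≤ 1)
    (hct : c ≤ t) (x R : ℝ) :
    |physPartial w t x R| ≤ dispConst c A / √(1 + freqScale t x) :=
  (abs_inv_pi_mul_re_le _).trans (hw.norm_integral_exp_mul_le hc hc1 hct x R)

lemma IsBoundedProfile.abs_physPartialDeriv_le (hw : IsBoundedProfile A w) (hc : 0 < c)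
    (hc1 : c ≤ 1) (hct : c ≤ t) (x R : ℝ) :
    |physPartialDeriv w t x R| ≤ dispConst c A * √(1 + freqScale t x) := by
  refine (abs_inv_pi_mul_re_le _).trans
    (le_of_eq_of_le ?_ (hw.norm_integral_exp_mul_mul_le hc hc1 hct x R))
  have pull_I : ∀ p : ℝ,
      Complex.exp (Complex.I * ((p * x + p ^ 3 * t : ℝ) : ℂ)) * (Complex.I * p) * w p
      = Complex.I * (Complex.exp (Complex.I * ((p * x + p ^ 3 * t : ℝ) : ℂ)) * (p * w p)) :=
    fun p => by ring
  simp_rw [pull_I]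
  rw [integral_const_mul, norm_mul, Complex.norm_I, one_mul]

lemma IsPhys.abs_le (hu : IsPhys w t u) (hw : IsBoundedProfile A w) (hc : 0 < c) (hc1 : c ≤ 1)
    (hct : c ≤ t) (x : ℝ) : |u x| ≤ dispConst c A := by
  refine le_of_tendsto (hu x).abs (Eventually.of_forall fun R =>
    (hw.abs_physPartial_le hc hc1 hct x R).trans
      (div_le_self (dispConst_nonneg hc hw.nonneg) (Real.one_le_sqrt.2 ?_)))
  linarith [freqScale_nonneg t x]

-- The decay of one factor compensates the growth of the derivative of the other one.
lemma IsPhys.abs_mul_sub_mul_le (hu : IsPhys w t u) (hv : IsPhys w₂ t v)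
    (hw : IsBoundedProfile A w) (hw₂ : IsBoundedProfile A w₂) (hc : 0 < c) (hc1 : c ≤ 1)
    (hct : c ≤ t) (x y : ℝ) :
    |u x * v x - u y * v y| ≤ 2 * dispConst c A ^ 2 * |x - y| := by
  refine le_of_tendsto (((hu x).mul (hv x)).sub ((hu y).mul (hv y))).abs
    (Eventually.of_forall fun R => ?_)
  have hC := dispConst_nonneg hc hw.nonneg
  refine Convex.norm_image_sub_le_of_norm_hasDerivWithin_le (s := univ)
    (f := fun x => physPartial w t x R * physPartial w₂ t x R)
    (fun z _ => ((hw.hasDerivAt_physPartial t z R).mul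
      (hw₂.hasDerivAt_physPartial t z R)).hasDerivWithinAt) (fun z _ => ?_) convex_univ
    (mem_univ _) (mem_univ _)
  have hq : 0 < √(1 + freqScale t z) := Real.sqrt_pos.2 (by linarith [freqScale_nonneg t z])
  calc ‖physPartialDeriv w t z R * physPartial w₂ t z R
          + physPartial w t z R * physPartialDeriv w₂ t z R‖
      ≤ |physPartialDeriv w t z R| * |physPartial w₂ t z R|
          + |physPartial w t z R| * |physPartialDeriv w₂ t z R| := by
        rw [← abs_mul, ← abs_mul]; exact norm_add_le _ _
    _ ≤ dispConst c A * √(1 + freqScale t z) * (dispConst c A / √(1 + freqScale t z))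
          + dispConst c A / √(1 + freqScale t z) * (dispConst c A * √(1 + freqScale t z)) := by
        gcongr
        exacts [hw.abs_physPartialDeriv_le hc hc1 hct z R, hw₂.abs_physPartial_le hc hc1 hct z R,
          hw.abs_physPartial_le hc hc1 hct z R, hw₂.abs_physPartialDeriv_le hc hc1 hct z R]
    _ = 2 * dispConst c A ^ 2 := by field_simp; ring

lemma IsPhys.lipschitzOnWith_ball (hu : IsPhys w t u) (hw : IsBoundedProfile A w) (hc : 0 < c)
    (hc1 : c ≤ 1) (hct : c ≤ t) (r : ℝ) :
    LipschitzOnWith (Real.toNNReal (dispConst c A * √(1 + freqScale t r))) u (Metric.ball 0 r) := by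
  refine LipschitzOnWith.of_dist_le' fun x hx y hy => ?_
  refine le_of_tendsto ((hu x).sub (hu y)).norm (Eventually.of_forall fun R => ?_)
  refine Convex.norm_image_sub_le_of_norm_hasDerivWithin_le (s := Metric.ball 0 r)
    (f := fun x => physPartial w t x R)
    (fun z _ => (hw.hasDerivAt_physPartial t z R).hasDerivWithinAt) (fun z hz => ?_)
    (convex_ball 0 r) hy hx
  refine (hw.abs_physPartialDeriv_le hc hc1 hct z R).trans ?_
  have hC := dispConst_nonneg hc hw.nonneg
  have ht : 0 < t := hc.trans_le hct
  have hz : |z| ≤ |r| := (mem_ball_zero_iff.1 hz).le.trans (le_abs_self r)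
  unfold freqScale
  gcongr

lemma IsPhys.continuous (hu : IsPhys w t u) (hw : IsBoundedProfile A w) (ht : 0 < t) :
    Continuous u :=
  continuous_iff_continuousAt.2 fun x =>
    (hu.lipschitzOnWith_ball hw (lt_min one_pos ht) (min_le_left _ _) (min_le_right _ _)
      (|x| + 1)).continuousOn.continuousAt
      (Metric.isOpen_ball.mem_nhds (by simp [Real.norm_eq_abs]))

end Phys

lemma exists_isCompact_ordConnected_between {K s : Set ℝ} (hK : IsCompact K)
    (hs : s.OrdConnected) (hKs : K ⊆ s) :
    ∃ L, IsCompact L ∧ L.OrdConnected ∧ K ⊆ L ∧ L ⊆ s := by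
  rcases K.eq_empty_or_nonempty with rfl | hne
  · exact ⟨∅, isCompact_empty, ordConnected_empty, subset_rfl, empty_subset _⟩
  · exact ⟨Icc (sInf K) (sSup K), isCompact_Icc, ordConnected_Icc,
      fun x hx => ⟨csInf_le hK.bddBelow hx, le_csSup hK.bddAbove hx⟩,
      hs.out (hKs (hK.sInf_mem hne)) (hKs (hK.sSup_mem hne))⟩

/-- `η` is a test function on `s`: smooth, with compact support contained in `s`. -/
structure IsTestFun {E : Type*} [NormedAddCommGroup E] [NormedSpace ℝ E] (s : Set E)
    (η : E → ℝ) : Prop where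
  contDiff : ContDiff ℝ (⊤ : ℕ∞) η
  hasCompactSupport : HasCompactSupport η
  tsupport_subset : tsupport η ⊆ s

namespace IsTestFun

section General

variable {E : Type*} [NormedAddCommGroup E] [NormedSpace ℝ E] {s : Set E} {η χ : E → ℝ}

lemma continuous (hη : IsTestFun s η) : Continuous η := hη.contDiff.continuous

lemma differentiable (hη : IsTestFun s η) : Differentiable ℝ η :=
  hη.contDiff.differentiable (by simp)

lemma eq_zero_of_notMem (hη : IsTestFun s η) {x : E} (hx : x ∉ s) : η x = 0 :=
  image_eq_zero_of_notMem_tsupport fun h => hx (hη.tsupport_subset h)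

lemma const_mul (hη : IsTestFun s η) (a : ℝ) : IsTestFun s fun x => a * η x where
  contDiff := contDiff_const.mul hη.contDiff
  hasCompactSupport := hη.hasCompactSupport.mul_left
  tsupport_subset :=
    (closure_mono (Function.support_mul_subset_right _ _)).trans hη.tsupport_subset

lemma sub (hη : IsTestFun s η) (hχ : IsTestFun s χ) : IsTestFun s fun x => η x - χ x where
  contDiff := hη.contDiff.sub hχ.contDiff
  hasCompactSupport := hη.hasCompactSupport.sub hχ.hasCompactSupport
  tsupport_subset := (tsupport_sub _ _).trans (union_subset hη.tsupport_subset hχ.tsupport_subset)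

lemma mul_prod {F : Type*} [NormedAddCommGroup F] [NormedSpace ℝ F] {r : Set F} {h : F → ℝ}
    (hη : IsTestFun s η) (hh : IsTestFun r h) :
    IsTestFun (s ×ˢ r) fun q : E × F => η q.1 * h q.2 := by
  have hsupp : tsupport (fun q : E × F => η q.1 * h q.2) ⊆ tsupport η ×ˢ tsupport h :=
    closure_minimal (fun q hq => ⟨subset_tsupport _ (left_ne_zero_of_mul hq),
      subset_tsupport _ (right_ne_zero_of_mul hq)⟩)
      ((isClosed_tsupport _).prod (isClosed_tsupport _))
  exact
    { contDiff := (hη.contDiff.comp contDiff_fst).mul (hh.contDiff.comp contDiff_snd)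
      hasCompactSupport := (hη.hasCompactSupport.isCompact.prod
        hh.hasCompactSupport.isCompact).of_isClosed_subset (isClosed_tsupport _) hsupp
      tsupport_subset := hsupp.trans (prod_mono hη.tsupport_subset hh.tsupport_subset) }

variable [MeasurableSpace E] [BorelSpace E] {μ : Measure E}

lemma integrable_mul (hη : IsTestFun s η) {f : E → ℝ} (hf : LocallyIntegrableOn f s μ) :
    Integrable (fun x => η x * f x) μ := by
  have hint : IntegrableOn (fun x => η x * f x) (tsupport η) μ :=
    (hf.integrableOn_compact_subset hη.tsupport_subset
      hη.hasCompactSupport.isCompact).continuousOn_mul hη.continuous.continuousOn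
      hη.hasCompactSupport.isCompact
  exact (integrableOn_iff_integrable_of_support_subset
    ((Function.support_mul_subset_left _ _).trans (subset_tsupport _))).1 hint

lemma integrable [IsFiniteMeasureOnCompacts μ] (hη : IsTestFun s η) : Integrable η μ :=
  hη.continuous.integrable_of_hasCompactSupport hη.hasCompactSupport

lemma memLp [IsFiniteMeasureOnCompacts μ] (hη : IsTestFun s η) (p : ENNReal) : MemLp η p μ :=
  hη.continuous.memLp_of_hasCompactSupport hη.hasCompactSupport

end General

variable {s : Set ℝ} {η : ℝ → ℝ}

lemma deriv (hη : IsTestFun s η) : IsTestFun s (deriv η) where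
  contDiff := (contDiff_infty_iff_deriv.1 hη.contDiff).2
  hasCompactSupport := hη.hasCompactSupport.deriv
  tsupport_subset := (tsupport_deriv_subset).trans hη.tsupport_subset

lemma hasDerivAt (hη : IsTestFun s η) (x : ℝ) : HasDerivAt η (_root_.deriv η x) x :=
  (hη.differentiable x).hasDerivAt

lemma exists_integral_eq_one (hs : IsOpen s) (hne : s.Nonempty) :
    ∃ η, IsTestFun s η ∧ ∫ x, η x = 1 := by
  obtain ⟨x₀, hx₀⟩ := hne
  obtain ⟨f, hfs, hfc, hfd, hfr, hf1⟩ := exists_contDiff_tsupport_subset (n := ⊤) (hs.mem_nhds hx₀)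
  have hf : IsTestFun s f := ⟨hfd, hfc, hfs⟩
  have hpos : 0 < ∫ x, f x := hf.continuous.integral_pos_of_hasCompactSupport_nonneg_nonzero hfc
    (fun x => (hfr ⟨x, rfl⟩).1) (x := x₀) (by rw [hf1]; norm_num)
  exact ⟨_, hf.const_mul (∫ x, f x)⁻¹, by rw [integral_const_mul, inv_mul_cancel₀ hpos.ne']⟩

lemma exists_deriv_eq (hs : s.OrdConnected) (hη : IsTestFun s η) (h0 : ∫ x, η x = 0) :
    ∃ χ, IsTestFun s χ ∧ _root_.deriv χ = η := by
  obtain ⟨K, hK, hKconn, hηK, hKs⟩ := exists_isCompact_ordConnected_between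
    hη.hasCompactSupport.isCompact hs hη.tsupport_subset
  have hzero : ∀ t, t ∉ K → ∫ x in Iic t, η x = 0 := fun t ht => by
    by_cases hlt : ∀ x ∈ tsupport η, x ≤ t
    · rw [← h0]
      exact setIntegral_eq_integral_of_forall_compl_eq_zero fun x hx =>
        image_eq_zero_of_notMem_tsupport fun h => hx (hlt x h)
    · push Not at hlt
      obtain ⟨y, hy, hty⟩ := hlt
      refine setIntegral_eq_zero_of_forall_eq_zero fun x hx =>
        image_eq_zero_of_notMem_tsupport fun h => ht ?_
      exact hKconn.out (hηK h) (hηK hy) ⟨hx, hty.le⟩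
  have hder : ∀ t, HasDerivAt (fun t => ∫ x in Iic t, η x) (η t) t := fun t => by
    have := ((hη.continuous.integral_hasStrictDerivAt 0 t).hasDerivAt.const_add
      (∫ x in Iic (0 : ℝ), η x))
    refine this.congr_of_eventuallyEq (Eventually.of_forall fun y => ?_)
    simp only [← intervalIntegral.integral_Iic_sub_Iic hη.integrable.integrableOn
      hη.integrable.integrableOn, add_sub_cancel]
  have hder' : _root_.deriv (fun t => ∫ x in Iic t, η x) = η := funext fun t => (hder t).deriv
  refine ⟨fun t => ∫ x in Iic t, η x, ⟨?_, HasCompactSupport.intro hK hzero, ?_⟩, hder'⟩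
  · rw [contDiff_infty_iff_deriv, hder']
    exact ⟨fun t => (hder t).differentiableAt, hη.contDiff⟩
  · have hsub : tsupport (fun t => ∫ x in Iic t, η x) ⊆ K :=
      closure_minimal (fun t ht => not_not.1 fun h => ht (hzero t h)) hK.isClosed
    exact hsub.trans hKs

end IsTestFun

lemma exists_ae_eq_const_of_integral_deriv_mul_eq_zero {s : Set ℝ} (hs : IsOpen s)
    (hconn : s.OrdConnected) {c : ℝ → ℝ} (hc : LocallyIntegrableOn c s)
    (h : ∀ η, IsTestFun s η → ∫ x, deriv η x * c x = 0) : ∃ k, ∀ᵐ x, x ∈ s → c x = k := by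
  rcases s.eq_empty_or_nonempty with rfl | hne
  · exact ⟨0, by simp⟩
  obtain ⟨f, hf, hf1⟩ := IsTestFun.exists_integral_eq_one hs hne
  refine ⟨∫ x, f x * c x, ?_⟩
  suffices ∀ᵐ x, x ∈ s → c x - ∫ y, f y * c y = 0 by simpa only [sub_eq_zero] using this
  have hconst : LocallyIntegrableOn (fun _ : ℝ => ∫ y, f y * c y) s :=
    (locallyIntegrable_const _).locallyIntegrableOn s
  refine hs.ae_eq_zero_of_integral_contDiff_smul_eq_zero (hc.sub hconst) fun g hgd hgc hgs => ?_
  have hg : IsTestFun s g := ⟨hgd, hgc, hgs⟩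
  obtain ⟨η, hη, hηg⟩ := (hg.sub (hf.const_mul (∫ x, g x))).exists_deriv_eq hconn (by
    rw [integral_sub hg.integrable (hf.integrable.const_mul _), integral_const_mul, hf1, mul_one,
      sub_self])
  calc ∫ x, g x • (c x - ∫ y, f y * c y)
      = (∫ x, g x * c x) - (∫ x, g x) * ∫ y, f y * c y := by
        simp only [smul_eq_mul, mul_sub]
        rw [integral_sub (hg.integrable_mul hc) (hg.integrable_mul hconst), integral_mul_const]
    _ = ∫ x, (g x - (∫ y, g y) * f x) * c x := by
        simp only [sub_mul, mul_assoc]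
        rw [integral_sub (hg.integrable_mul hc) ((hf.integrable_mul hc).const_mul _),
          integral_const_mul]
    _ = 0 := by simpa only [hηg] using h η hη

lemma hasDerivAt_integral_of_continuousOn_Icc {E : Type*} [NormedAddCommGroup E]
    [NormedSpace ℝ E] [CompleteSpace E] {a b s x : ℝ} {F : ℝ → E}
    (hF : ContinuousOn F (Icc a b)) (hs : s ∈ Icc a b) (hx : x ∈ Ioo a b) :
    HasDerivAt (fun y => ∫ r in s..y, F r) (F x) x := by
  have hnhds : Icc a b ∈ 𝓝 x := Icc_mem_nhds hx.1 hx.2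
  refine intervalIntegral.integral_hasDerivAt_right
    (hF.mono (uIcc_subset_Icc hs (Ioo_subset_Icc_self hx))).intervalIntegrable ?_
    (hF.continuousAt hnhds)
  exact (hF.stronglyMeasurableAtFilter_nhdsWithin measurableSet_Icc x).filter_mono
    (nhdsWithin_eq_nhds.2 hnhds).ge

lemma sub_eq_integral_of_weak_deriv {a b : ℝ} {f F : ℝ → ℝ}
    (hf : ContinuousOn f (Icc a b)) (hF : ContinuousOn F (Icc a b))
    (h : ∀ η, IsTestFun (Ioo a b) η → ∫ x, (deriv η x * f x + η x * F x) = 0) {s t : ℝ}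
    (hs : s ∈ Icc a b) (ht : t ∈ Icc a b) : f t - f s = ∫ x in s..t, F x := by
  rcases (hs.1.trans hs.2).eq_or_lt with rfl | hab
  · obtain rfl : s = t := subsingleton_Icc_of_ge le_rfl hs ht
    simp
  set P : ℝ → ℝ := fun y => ∫ x in s..y, F x
  have hsub : Ioo a b ⊆ Icc a b := Ioo_subset_Icc_self
  have hP : ∀ y ∈ Ioo a b, HasDerivAt P (F y) y := fun y hy =>
    hasDerivAt_integral_of_continuousOn_Icc hF hs hy
  have hPc : ContinuousOn P (Icc a b) := by
    simpa only [uIcc_of_le hab.le] using intervalIntegral.continuousOn_primitive_interval'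
      (hF.intervalIntegrable_of_Icc hab.le) (uIcc_of_le hab.le ▸ hs)
  have loc : ∀ {g : ℝ → ℝ}, ContinuousOn g (Icc a b) → LocallyIntegrableOn g (Ioo a b) :=
    fun hg => (hg.mono hsub).locallyIntegrableOn measurableSet_Ioo
  obtain ⟨k, hk⟩ := exists_ae_eq_const_of_integral_deriv_mul_eq_zero isOpen_Ioo ordConnected_Ioo
    (c := fun x => f x - P x) (loc (hf.sub hPc)) fun η hη => by
      have hibp := integral_mul_deriv_eq_deriv_mul_of_integrable
        (fun y _ => hη.hasDerivAt y) (fun y hy => hP y (hη.tsupport_subset hy))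
        (hη.integrable_mul (loc hF)) (hη.deriv.integrable_mul (loc hPc))
        (hη.integrable_mul (loc hPc))
      have hw := h η hη
      rw [integral_add (hη.deriv.integrable_mul (loc hf)) (hη.integrable_mul (loc hF))] at hw
      simp only [mul_sub]
      rw [integral_sub (hη.deriv.integrable_mul (loc hf)) (hη.deriv.integrable_mul (loc hPc))]
      linarith
  have hkIoo : EqOn (fun x => f x - P x) (fun _ => k) (Ioo a b) :=
    Measure.eqOn_open_of_ae_eq (μ := volume) ((ae_restrict_iff' measurableSet_Ioo).2 hk)
      isOpen_Ioo ((hf.sub hPc).mono hsub) continuousOn_const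
  have hkIcc : EqOn (fun x => f x - P x) (fun _ => k) (Icc a b) :=
    hkIoo.of_subset_closure (hf.sub hPc) continuousOn_const hsub (closure_Ioo hab.ne).ge
  have hPs : P s = 0 := intervalIntegral.integral_same
  linarith [hkIcc hs, hkIcc ht]

lemma ESol.aestronglyMeasurable {I : Set ℝ} (S : ESol I) {A : ℝ}
    (hA : ∀ t ∈ I, ∀ p, ‖S.w t p‖ ≤ A) :
    AEStronglyMeasurable (fun q : ℝ × ℝ => S.u q.1 q.2)
      (volume.restrict (interior I ×ˢ (univ : Set ℝ))) := by
  have hmeas : MeasurableSet (interior I ×ˢ (univ : Set ℝ)) := measurableSet_interior.prod .univ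
  refine aestronglyMeasurable_of_tendsto_ae atTop
    (f := fun (n : ℕ) (q : ℝ × ℝ) => physPartial (S.w q.1) q.1 q.2 n) (fun n => ?_) ?_
  · refine ContinuousOn.aestronglyMeasurable (continuousOn_const.mul
      (Complex.continuous_re.comp_continuousOn ?_)) hmeas
    refine continuousOn_of_dominated (bound := fun _ => A) (fun q hq => ?_) (fun q hq => ?_)
      (integrable_const _) ?_
    · exact ((S.memE q.1 (interior_subset hq.1)).integrableOn_mul
        (by fun_prop) n).aestronglyMeasurable
    · refine Eventually.of_forall fun p => ?_
      rw [norm_mul, norm_exp_I_mul_ofReal, one_mul]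
      exact hA q.1 (interior_subset hq.1) p
    · filter_upwards [ae_restrict_mem measurableSet_Ioc] with p hp
      exact ContinuousOn.mul (Continuous.continuousOn (by fun_prop))
        (S.contt.comp (f := fun q : ℝ × ℝ => (q.1, p)) (by fun_prop)
          fun q hq => ⟨interior_subset hq.1, hp.1⟩)
  · filter_upwards [ae_restrict_mem hmeas] with q hq
    exact (S.isPhys q.1 (interior_subset hq.1) q.2).comp tendsto_natCast_atTop_atTop

lemma integral_add_add_const_mul {X : Type*} [MeasurableSpace X] {μ : Measure X} {f g h : X → ℝ}
    {c : ℝ} (hf : Integrable f μ) (hg : Integrable g μ) (hh : Integrable h μ) :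
    ∫ x, (f x + (g x + c * h x)) ∂μ = (∫ x, f x ∂μ) + ((∫ x, g x ∂μ) + c * ∫ x, h x ∂μ) := by
  rw [← integral_const_mul, ← integral_add hg (hh.const_mul c)]
  exact integral_add hf (hg.add (hh.const_mul c))

section WeakFormulation

variable {s r : Set ℝ} {F : ℝ → ℝ → ℝ} {C : ℝ} {α k : ℝ → ℝ}

lemma IsTestFun.integrable_mul_prod (hα : IsTestFun s α) (hk : IsTestFun r k)
    (hs : MeasurableSet s)
    (hF : AEStronglyMeasurable (fun q : ℝ × ℝ => F q.1 q.2)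
      (volume.restrict (s ×ˢ (univ : Set ℝ))))
    (hC : ∀ t ∈ s, ∀ x, |F t x| ≤ C) :
    Integrable fun q : ℝ × ℝ => F q.1 q.2 * (α q.1 * k q.2) := by
  have hFC : ∀ᵐ q ∂(volume.restrict (s ×ˢ (univ : Set ℝ))), ‖F q.1 q.2‖ ≤ C := by
    filter_upwards [ae_restrict_mem (hs.prod .univ)] with q hq using hC q.1 hq.1 q.2
  refine (integrableOn_iff_integrable_of_support_subset fun q hq => ?_).1
    ((hα.mul_prod hk).integrable.integrableOn.bdd_mul hF hFC)
  exact ⟨not_not.1 fun h => hq (by simp only [hα.eq_zero_of_notMem h, zero_mul, mul_zero]),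
    mem_univ _⟩

lemma integral_mul_mul_prod
    (h : Integrable fun q : ℝ × ℝ => F q.1 q.2 * (α q.1 * k q.2)) :
    ∫ q : ℝ × ℝ, F q.1 q.2 * (α q.1 * k q.2) = ∫ t, α t * ∫ x, F t x * k x := by
  rw [Measure.volume_eq_prod] at h ⊢
  rw [integral_prod _ h]
  simp only [← integral_const_mul, mul_left_comm]

lemma integrable_mul_integral_mul
    (h : Integrable fun q : ℝ × ℝ => F q.1 q.2 * (α q.1 * k q.2)) :
    Integrable fun t => α t * ∫ x, F t x * k x := by
  rw [Measure.volume_eq_prod] at h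
  simpa only [← integral_const_mul, mul_left_comm] using h.integral_prod_left

lemma IsSolOn.integral_mul_prod_eq_zero {ε : ℝ} {u : ℝ → ℝ → ℝ} {I : Set ℝ} {η h : ℝ → ℝ}
    (hu : IsSolOn ε u I) (hη : IsTestFun (interior I) η) (hh : IsTestFun univ h) :
    ∫ q : ℝ × ℝ, (u q.1 q.2 * (deriv η q.1 * h q.2 + η q.1 * deriv (deriv (deriv h)) q.2)
      + ε * u q.1 q.2 ^ 3 * (η q.1 * deriv h q.2)) = 0 := by
  have hdx : ∀ {k : ℝ → ℝ}, IsTestFun univ k →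
      dx1 (fun t x => η t * k x) = fun t x => η t * deriv k x := fun hk => by
    funext t x
    exact deriv_const_mul _ (hk.differentiable x)
  have hdt : dt1 (fun t x => η t * h x) = fun t x => deriv η t * h x := by
    funext t x
    exact deriv_mul_const (hη.differentiable t) _
  have htest := hη.mul_prod hh
  have key := hu (fun t x => η t * h x) htest.contDiff htest.hasCompactSupport
    htest.tsupport_subset
  rwa [hdx hh, hdx hh.deriv, hdx hh.deriv.deriv, hdt] at key

lemma IsSolOn.integral_time_eq_zero {ε : ℝ} {u : ℝ → ℝ → ℝ} {I : Set ℝ} {η h : ℝ → ℝ}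
    (hu : IsSolOn ε u I)
    (hum : AEStronglyMeasurable (fun q : ℝ × ℝ => u q.1 q.2)
      (volume.restrict (interior I ×ˢ (univ : Set ℝ))))
    (hC : ∀ t ∈ I, ∀ x, |u t x| ≤ C) (hη : IsTestFun (interior I) η) (hh : IsTestFun univ h) :
    ∫ t, (deriv η t * (∫ x, u t x * h x) + η t * ((∫ x, u t x * deriv (deriv (deriv h)) x)
      + ε * ∫ x, u t x ^ 3 * deriv h x)) = 0 := by
  have hC' : ∀ t ∈ interior I, ∀ x, |u t x| ≤ C := fun t ht => hC t (interior_subset ht)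
  have hC3 : ∀ t ∈ interior I, ∀ x, |u t x ^ 3| ≤ C ^ 3 := fun t ht x => by
    rw [abs_pow]
    exact pow_le_pow_left₀ (abs_nonneg _) (hC' t ht x) 3
  have i₁ := hη.deriv.integrable_mul_prod hh measurableSet_interior hum hC'
  have i₂ := hη.integrable_mul_prod hh.deriv.deriv.deriv measurableSet_interior hum hC'
  have i₃ := hη.integrable_mul_prod hh.deriv measurableSet_interior (F := fun t x => u t x ^ 3)
    (hum.pow 3) hC3
  have key := hu.integral_mul_prod_eq_zero hη hh
  simp only [mul_add, mul_assoc ε, mul_left_comm (η _) ε, add_assoc] at key ⊢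
  rw [integral_add_add_const_mul i₁ i₂ i₃, integral_mul_mul_prod i₁, integral_mul_mul_prod i₂,
    integral_mul_mul_prod (F := fun t x => u t x ^ 3) i₃] at key
  rw [integral_add_add_const_mul (integrable_mul_integral_mul i₁) (integrable_mul_integral_mul i₂)
    (integrable_mul_integral_mul (F := fun t x => u t x ^ 3) i₃), key]

end WeakFormulation

/-- A strongly continuous one-parameter group of linear isometries of a real Hilbert space, such as
the translations of `L²(ℝ)`. -/
structure IsometryGroup (H : Type*) [NormedAddCommGroup H] [InnerProductSpace ℝ H] where
  toFun : ℝ → H →ₗᵢ[ℝ] H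
  zero_apply : ∀ f, toFun 0 f = f
  add_apply : ∀ s r f, toFun (s + r) f = toFun s (toFun r f)
  continuous_apply : ∀ f, Continuous fun s => toFun s f

instance (H : Type*) [NormedAddCommGroup H] [InnerProductSpace ℝ H] :
    CoeFun (IsometryGroup H) fun _ => ℝ → H →ₗᵢ[ℝ] H := ⟨IsometryGroup.toFun⟩

/-- The rescaled kernel `s ↦ c g(cs)`, which concentrates at the origin as `c → ∞`. -/
def rescale (c : ℝ) (g : ℝ → ℝ) : ℝ → ℝ := fun s => c * g (c * s)

section Kernels

variable {c : ℝ} {g : ℝ → ℝ}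

lemma IsTestFun.rescale (hg : IsTestFun univ g) (c : ℝ) : IsTestFun univ (rescale c g) := by
  rcases eq_or_ne c 0 with rfl | hc
  · have : MKdVPaper.rescale 0 g = fun s => 0 * g s := by
      simp only [funext_iff, MKdVPaper.rescale, zero_mul, implies_true]
    exact this ▸ hg.const_mul 0
  · exact ⟨contDiff_const.mul (hg.contDiff.comp (contDiff_const.mul contDiff_id)),
      (hg.hasCompactSupport.comp_homeomorph (Homeomorph.mulLeft₀ c hc)).mul_left, subset_univ _⟩

lemma rescale_even (hg : g.Even) (c : ℝ) : (rescale c g).Even := fun s => by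
  rw [rescale, rescale, mul_neg, hg]

lemma deriv_rescale (c : ℝ) (g : ℝ → ℝ) (s : ℝ) :
    deriv (rescale c g) s = c * (c * deriv g (c * s)) := by
  unfold rescale
  rw [deriv_const_mul_field, deriv_comp_mul_left, smul_eq_mul]

lemma integral_rescale_smul {E : Type*} [NormedAddCommGroup E] [NormedSpace ℝ E] (hc : 0 < c)
    (F : ℝ → E) : ∫ s, rescale c g s • F s = ∫ r, g r • F (r / c) := by
  have := Measure.integral_comp_mul_left (fun r => g r • F (r / c)) c
  rw [abs_of_pos (inv_pos.2 hc), eq_inv_smul_iff₀ hc.ne', ← integral_smul] at this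
  simpa only [rescale, mul_smul, mul_div_cancel_left₀ _ hc.ne'] using this

lemma integral_abs_mul_abs_deriv_rescale (hc : 0 < c) (g : ℝ → ℝ) :
    ∫ s, |s| * |deriv (rescale c g) s| = ∫ s, |s| * |deriv g s| := by
  have := integral_rescale_smul (g := fun s => |s| * |deriv g s|) hc fun _ => (1 : ℝ)
  simp only [smul_eq_mul, mul_one] at this
  rw [← this]
  congr 1 with s
  simp only [deriv_rescale, rescale, abs_mul, abs_of_pos hc]
  ring

lemma deriv_odd_of_even (hg : g.Even) : (deriv g).Odd := fun s => by
  rw [← neg_eq_iff_eq_neg, ← deriv_comp_neg]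
  simp only [hg _]

lemma deriv_even_of_odd (hg : g.Odd) : (deriv g).Even := fun s => by
  rw [← neg_inj, ← deriv_comp_neg, ← deriv.fun_neg]
  simp only [hg _]

lemma exists_even_isTestFun : ∃ g : ℝ → ℝ, IsTestFun univ g ∧ g.Even ∧ ∫ s, g s = 1 :=
  let φ : ContDiffBump (0 : ℝ) := default
  ⟨φ.normed volume, ⟨φ.contDiff_normed, φ.hasCompactSupport_normed, subset_univ _⟩,
    φ.normed_neg, φ.integral_normed⟩

end Kernels

section Mollify

variable {H : Type*} [NormedAddCommGroup H] [InnerProductSpace ℝ H] (T : IsometryGroup H)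
  {κ : ℝ → ℝ}

lemma IsometryGroup.inner_neg_apply (s : ℝ) (f g : H) :
    inner ℝ (T (-s) f) g = inner ℝ f (T s g) := by
  rw [← (T s).inner_map_map, ← T.add_apply, add_neg_cancel, T.zero_apply]

lemma integrable_smul_apply (hκ : Integrable κ) (f : H) : Integrable fun s => κ s • T s f := by
  refine (hκ.norm.mul_const ‖f‖).mono'
    (hκ.aestronglyMeasurable.smul (T.continuous_apply f).aestronglyMeasurable) (.of_forall ?_)
  intro s
  rw [norm_smul, LinearIsometry.norm_map]

/-- The mollification `f ↦ ∫ κ(s) T(s)f ds`; for the translation group this is convolution with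
the reflected kernel. -/
def mollify (hκ : Integrable κ) : H →L[ℝ] H :=
  LinearMap.mkContinuous
    { toFun := fun f => ∫ s, κ s • T s f
      map_add' := fun f g => by
        rw [← integral_add (integrable_smul_apply T hκ f) (integrable_smul_apply T hκ g)]
        simp only [map_add, smul_add]
      map_smul' := fun c f => by
        rw [RingHom.id_apply, ← integral_smul]
        simp only [map_smul, smul_comm c] }
    (∫ s, ‖κ s‖) fun f => by
      rw [← integral_mul_const]
      refine (norm_integral_le_integral_norm _).trans_eq ?_
      simp only [norm_smul, LinearIsometry.norm_map]

lemma mollify_apply (hκ : Integrable κ) (f : H) : mollify T hκ f = ∫ s, κ s • T s f := rfl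

variable [CompleteSpace H]

lemma inner_mollify (hκ : Integrable κ) (f g : H) :
    inner ℝ (mollify T hκ f) g = ∫ s, κ s * inner ℝ (T s f) g := by
  rw [real_inner_comm, mollify_apply, ← integral_inner (integrable_smul_apply T hκ f)]
  simp only [inner_smul_right, real_inner_comm g]

lemma isSymmetric_mollify (hκ : Integrable κ) (he : κ.Even) :
    (mollify T hκ : H →ₗ[ℝ] H).IsSymmetric := fun f g => by
  rw [ContinuousLinearMap.coe_coe, inner_mollify, real_inner_comm, inner_mollify,
    ← integral_neg_eq_self]
  simp only [he _, T.inner_neg_apply, real_inner_comm f]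

lemma inner_mollify_eq_neg_of_odd (hκ : Integrable κ) (ho : κ.Odd) (f g : H) :
    inner ℝ (mollify T hκ f) g = -∫ s, κ s * inner ℝ (T (-s) f) g := by
  rw [inner_mollify, ← integral_neg_eq_self, ← integral_neg]
  simp only [ho _, neg_mul]

lemma inner_mollify_self_of_odd (hκ : Integrable κ) (ho : κ.Odd) (f : H) :
    inner ℝ (mollify T hκ f) f = 0 := by
  have h : inner ℝ (mollify T hκ f) f = -inner ℝ (mollify T hκ f) f := by
    nth_rw 1 [inner_mollify_eq_neg_of_odd T hκ ho, inner_mollify]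
    simp only [T.inner_neg_apply, real_inner_comm f]
  linarith

lemma two_mul_inner_mollify_of_odd (hκ : Integrable κ) (ho : κ.Odd) (f g : H) :
    2 * inner ℝ (mollify T hκ f) g
      = ∫ s, κ s * (inner ℝ (T s f) g - inner ℝ (T (-s) f) g) := by
  have hint : Integrable fun s => κ s * inner ℝ (T s f) g := by
    simpa only [inner_smul_left, RCLike.conj_to_real] using
      (integrable_smul_apply T hκ f).inner_const (𝕜 := ℝ) g
  have hint_neg : Integrable fun s => κ s * inner ℝ (T (-s) f) g := by
    simpa only [ho _, neg_mul, Pi.neg_def, neg_neg] using hint.comp_neg.neg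
  simp only [mul_sub]
  rw [integral_sub hint hint_neg, two_mul, sub_eq_add_neg, ← inner_mollify,
    ← inner_mollify_eq_neg_of_odd T hκ ho]

lemma two_mul_abs_inner_mollify_le_of_odd (hκ : Integrable κ) (ho : κ.Odd)
    (hκ' : Integrable fun s => |s| * |κ s|) {f g : H} {K : ℝ}
    (h : ∀ s, |inner ℝ (T s f) g - inner ℝ (T (-s) f) g| ≤ K * |s|) :
    2 * |inner ℝ (mollify T hκ f) g| ≤ K * ∫ s, |s| * |κ s| := by
  rw [← abs_two (α := ℝ), ← abs_mul, two_mul_inner_mollify_of_odd T hκ ho, ← integral_const_mul,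
    ← Real.norm_eq_abs]
  refine norm_integral_le_of_norm_le (hκ'.const_mul K) (.of_forall fun s => ?_)
  rw [norm_mul, Real.norm_eq_abs, Real.norm_eq_abs]
  calc |κ s| * |inner ℝ (T s f) g - inner ℝ (T (-s) f) g| ≤ |κ s| * (K * |s|) := by
        gcongr
        exact h s
    _ = K * (|s| * |κ s|) := by ring

lemma tendsto_mollify_rescale {g : ℝ → ℝ} (hg : IsTestFun univ g) (hg1 : ∫ s, g s = 1) (f : H) :
    Tendsto (fun c => mollify T (hg.rescale c).integrable f) atTop (𝓝 f) := by
  have hlim : Tendsto (fun c : ℝ => ∫ r, g r • T (r / c) f) atTop (𝓝 (∫ r, g r • f)) := by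
    refine tendsto_integral_filter_of_dominated_convergence (fun r => ‖g r‖ * ‖f‖)
      (.of_forall fun c => ?_) (.of_forall fun c => .of_forall fun r => ?_)
      (hg.integrable.norm.mul_const _) (.of_forall fun r => ?_)
    · exact hg.continuous.aestronglyMeasurable.smul
        ((T.continuous_apply f).comp (continuous_id.div_const c)).aestronglyMeasurable
    · rw [norm_smul, LinearIsometry.norm_map]
    · have := ((T.continuous_apply f).tendsto 0).comp
        (tendsto_const_nhds (x := r).div_atTop tendsto_id)
      rw [T.zero_apply] at this
      exact this.const_smul (g r)
  rw [integral_smul_const, hg1, one_smul] at hlim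
  refine hlim.congr' ?_
  filter_upwards [eventually_gt_atTop 0] with c hc
  rw [mollify_apply, integral_rescale_smul hc]

end Mollify

section Gronwall

variable {a b K t₀ : ℝ} {N : ℝ → ℝ}

lemma eq_zero_of_le_mul_abs_integral_left (hN : ContinuousOn N (Icc a b))
    (hN0 : ∀ t ∈ Icc a b, 0 ≤ N t) (h : ∀ t ∈ Icc a b, N t ≤ K * |∫ r in a..t, N r|) :
    ∀ t ∈ Icc a b, N t = 0 := by
  intro t ht
  have hab : a ≤ b := ht.1.trans ht.2
  have hprim : ContinuousOn (fun t => ∫ r in a..t, N r) (Icc a b) :=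
    intervalIntegral.continuousOn_primitive_interval (uIcc_of_le hab ▸ hN.integrableOn_Icc) |>.mono
      Icc_subset_uIcc
  have hderiv : ∀ x ∈ Ico a b, HasDerivWithinAt (fun t => ∫ r in a..t, N r) (N x) (Ici x) x := by
    intro x hx
    have hnhds : Icc a b ∈ 𝓝[>] x := Icc_mem_nhdsGT_of_mem hx
    refine intervalIntegral.integral_hasDerivWithinAt_right (t := Ioi x)
      (hN.mono (uIcc_subset_Icc (left_mem_Icc.2 hab) (Ico_subset_Icc_self hx))).intervalIntegrable
      ((hN.stronglyMeasurableAtFilter_nhdsWithin measurableSet_Icc x).filter_mono ?_)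
      ((hN x (Ico_subset_Icc_self hx)).mono_of_mem_nhdsWithin hnhds)
    exact nhdsWithin_le_of_mem hnhds
  have hzero := eq_zero_of_abs_deriv_le_mul_abs_self_of_eq_zero_right hprim hderiv
    intervalIntegral.integral_same (fun x hx => by
      have hx' := Ico_subset_Icc_self hx
      simpa only [Real.norm_eq_abs, abs_of_nonneg (hN0 x hx')] using h x hx') t ht
  have hle := h t ht
  rw [hzero, abs_zero, mul_zero] at hle
  exact hle.antisymm (hN0 t ht)

lemma eq_zero_of_le_mul_abs_integral (ht₀ : t₀ ∈ Icc a b) (hN : ContinuousOn N (Icc a b))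
    (hN0 : ∀ t ∈ Icc a b, 0 ≤ N t) (h : ∀ t ∈ Icc a b, N t ≤ K * |∫ r in t₀..t, N r|) :
    ∀ t ∈ Icc a b, N t = 0 := by
  intro t ht
  rcases le_total t₀ t with hle | hle
  · have hsub : Icc t₀ b ⊆ Icc a b := Icc_subset_Icc_left ht₀.1
    exact eq_zero_of_le_mul_abs_integral_left (hN.mono hsub) (fun r hr => hN0 r (hsub hr))
      (fun r hr => h r (hsub hr)) t ⟨hle, ht.2⟩
  · have hmaps : MapsTo Neg.neg (Icc (-t₀) (-a)) (Icc a b) := fun r hr =>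
      ⟨le_neg.1 hr.2, (neg_le.1 hr.1).trans ht₀.2⟩
    have hneg := eq_zero_of_le_mul_abs_integral_left (N := fun r => N (-r)) (K := K)
      (hN.comp continuousOn_neg hmaps) (fun r hr => hN0 _ (hmaps hr)) (fun r hr => by
        rw [intervalIntegral.integral_comp_neg, neg_neg, intervalIntegral.integral_symm, abs_neg]
        exact h _ (hmaps hr)) (-t) ⟨neg_le_neg hle, neg_le_neg ht.1⟩
    rwa [neg_neg] at hneg

end Gronwall

section Energy

variable {H : Type*} [NormedAddCommGroup H] [InnerProductSpace ℝ H]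

lemma hasDerivAt_inner_apply_self {J : H →L[ℝ] H} (hJ : (J : H →ₗ[ℝ] H).IsSymmetric) {Z : ℝ → H}
    {V : H} {x : ℝ} (hJZ : HasDerivAt (fun t => J (Z t)) V x) (hZ : ContinuousAt Z x) :
    HasDerivAt (fun t => inner ℝ (J (Z t)) (Z t)) (2 * inner ℝ V (Z x)) x := by
  rw [hasDerivAt_iff_tendsto_slope] at hJZ ⊢
  have hlim := hJZ.inner (𝕜 := ℝ) ((hZ.tendsto.mono_left nhdsWithin_le_nhds).add_const (Z x))
  rw [inner_add_right, ← two_mul] at hlim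
  refine hlim.congr fun y => ?_
  have hsymm : inner ℝ (J (Z x)) (Z y) = inner ℝ (J (Z y)) (Z x) := by
    rw [real_inner_comm]
    exact (hJ (Z y) (Z x)).symm
  simp only [slope_def_module, real_inner_smul_left, inner_add_right, inner_sub_left, hsymm,
    smul_eq_mul]
  ring

lemma continuousOn_inner_mollify (T : IsometryGroup H) {κ : ℝ → ℝ} (hκ : Integrable κ)
    {F Z : ℝ → H} {s : Set ℝ} (hF : ContinuousOn F s) (hZ : ContinuousOn Z s) :
    ContinuousOn (fun t => inner ℝ (mollify T hκ (F t)) (Z t)) s :=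
  ((mollify T hκ).continuous.comp_continuousOn hF).inner hZ

/-- The equation `Z' = T''' Z + ε T' B` (where `T'` stands for the generator of `T`, up to sign),
integrated in time and mollified by an arbitrary test function, onto which the derivatives fall. -/
structure IsMollifiedSol (T : IsometryGroup H) (ε a b : ℝ) (Z B : ℝ → H) : Prop where
  continuousOn : ContinuousOn Z (Icc a b)
  continuousOn_nonlinearity : ContinuousOn B (Icc a b)
  mollify_sub : ∀ {g : ℝ → ℝ} (hg : IsTestFun univ g) {s t : ℝ}, s ∈ Icc a b → t ∈ Icc a b →
    mollify T hg.integrable (Z t) - mollify T hg.integrable (Z s) = ∫ r in s..t,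
      (mollify T hg.deriv.deriv.deriv.integrable (Z r) + ε • mollify T hg.deriv.integrable (B r))

namespace IsMollifiedSol

variable {T : IsometryGroup H} {ε a b L : ℝ} {Z B : ℝ → H} {g : ℝ → ℝ}

lemma continuousOn_rhs (h : IsMollifiedSol T ε a b Z B) (hg : IsTestFun univ g) :
    ContinuousOn (fun r => mollify T hg.deriv.deriv.deriv.integrable (Z r)
      + ε • mollify T hg.deriv.integrable (B r)) (Icc a b) :=
  ((mollify T _).continuous.comp_continuousOn h.continuousOn).add
    (((mollify T _).continuous.comp_continuousOn h.continuousOn_nonlinearity).const_smul ε)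

variable [CompleteSpace H]

-- The kernel `g'''` is odd, so the dispersive term drops out of the energy identity.
lemma hasDerivAt_energy (h : IsMollifiedSol T ε a b Z B) (hg : IsTestFun univ g) (he : g.Even)
    {x : ℝ} (hx : x ∈ Ioo a b) :
    HasDerivAt (fun t => inner ℝ (mollify T hg.integrable (Z t)) (Z t))
      (ε * (2 * inner ℝ (mollify T hg.deriv.integrable (B x)) (Z x))) x := by
  have hxI : x ∈ Icc a b := Ioo_subset_Icc_self hx
  have hderiv : HasDerivAt (fun t => mollify T hg.integrable (Z t))
      (mollify T hg.deriv.deriv.deriv.integrable (Z x)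
        + ε • mollify T hg.deriv.integrable (B x)) x := by
    refine ((hasDerivAt_integral_of_continuousOn_Icc (h.continuousOn_rhs hg) hxI hx).add_const
      (mollify T hg.integrable (Z x))).congr_of_eventuallyEq ?_
    filter_upwards [Icc_mem_nhds hx.1 hx.2] with y hy
    rw [← h.mollify_sub hg hxI hy, sub_add_cancel]
  have hodd : (deriv (deriv (deriv g))).Odd :=
    deriv_odd_of_even (deriv_even_of_odd (deriv_odd_of_even he))
  convert hasDerivAt_inner_apply_self (isSymmetric_mollify T hg.integrable he) hderiv
    (h.continuousOn.continuousAt (Icc_mem_nhds hx.1 hx.2)) using 1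
  rw [inner_add_left, inner_mollify_self_of_odd T _ hodd, real_inner_smul_left]
  ring

lemma abs_energy_deriv_le (ε : ℝ) {f z : H}
    (hlip : ∀ s, |inner ℝ (T s f) z - inner ℝ (T (-s) f) z| ≤ L * ‖z‖ ^ 2 * |s|)
    (hg : IsTestFun univ g) (he : g.Even) :
    |ε * (2 * inner ℝ (mollify T hg.deriv.integrable f) z)|
      ≤ |ε| * (L * ‖z‖ ^ 2 * ∫ y, |y| * |deriv g y|) := by
  have hmoment : Integrable fun y => |y| * |deriv g y| :=
    (continuous_abs.mul hg.deriv.continuous.abs).integrable_of_hasCompactSupport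
      (hg.deriv.hasCompactSupport.comp_left (g := fun y : ℝ => |y|) abs_zero).mul_left
  rw [abs_mul, abs_mul, abs_two]
  exact mul_le_mul_of_nonneg_left (two_mul_abs_inner_mollify_le_of_odd T hg.deriv.integrable
    (deriv_odd_of_even he) hmoment hlip) (abs_nonneg ε)

lemma abs_energy_sub_le (h : IsMollifiedSol T ε a b Z B)
    (hlip : ∀ t ∈ Icc a b, ∀ s,
      |inner ℝ (T s (B t)) (Z t) - inner ℝ (T (-s) (B t)) (Z t)| ≤ L * ‖Z t‖ ^ 2 * |s|)
    (hg : IsTestFun univ g) (he : g.Even) {s t : ℝ} (hs : s ∈ Icc a b) (ht : t ∈ Icc a b) :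
    |inner ℝ (mollify T hg.integrable (Z t)) (Z t)
        - inner ℝ (mollify T hg.integrable (Z s)) (Z s)|
      ≤ |∫ r in s..t, |ε| * (L * ‖Z r‖ ^ 2 * ∫ y, |y| * |deriv g y|)| := by
  have hsub : uIcc s t ⊆ Icc a b := uIcc_subset_Icc hs ht
  have hZ : ContinuousOn Z (uIcc s t) := h.continuousOn.mono hsub
  have hderiv : ∀ x ∈ Ioo (min s t) (max s t), HasDerivWithinAt
      (fun t => inner ℝ (mollify T hg.integrable (Z t)) (Z t))
      (ε * (2 * inner ℝ (mollify T hg.deriv.integrable (B x)) (Z x))) (Ioi x) x := fun x hx =>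
    (h.hasDerivAt_energy hg he
      ⟨(le_min hs.1 ht.1).trans_lt hx.1, hx.2.trans_le (max_le hs.2 ht.2)⟩).hasDerivWithinAt
  have hint : IntervalIntegrable
      (fun r => ε * (2 * inner ℝ (mollify T hg.deriv.integrable (B r)) (Z r))) volume s t :=
    ((continuousOn_inner_mollify T _ (h.continuousOn_nonlinearity.mono hsub)
      hZ).intervalIntegrable.const_mul 2).const_mul ε
  have hbound : IntervalIntegrable
      (fun r => |ε| * (L * ‖Z r‖ ^ 2 * ∫ y, |y| * |deriv g y|)) volume s t :=
    (((hZ.norm.pow 2).intervalIntegrable.const_mul L).mul_const _).const_mul _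
  rw [← intervalIntegral.integral_eq_sub_of_hasDeriv_right
    (continuousOn_inner_mollify T _ hZ hZ) hderiv hint, ← Real.norm_eq_abs]
  exact intervalIntegral.norm_integral_le_abs_of_norm_le
    ((ae_restrict_mem measurableSet_uIoc).mono fun r hr =>
      abs_energy_deriv_le ε (hlip r (hsub (uIoc_subset_uIcc hr))) hg he) hbound

-- The bound of `abs_energy_sub_le` is invariant under rescaling of the mollifier.
lemma exists_abs_norm_sq_sub_le (h : IsMollifiedSol T ε a b Z B)
    (hlip : ∀ t ∈ Icc a b, ∀ s,
      |inner ℝ (T s (B t)) (Z t) - inner ℝ (T (-s) (B t)) (Z t)| ≤ L * ‖Z t‖ ^ 2 * |s|) :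
    ∃ K, ∀ s ∈ Icc a b, ∀ t ∈ Icc a b,
      |‖Z t‖ ^ 2 - ‖Z s‖ ^ 2| ≤ K * |∫ r in s..t, ‖Z r‖ ^ 2| := by
  obtain ⟨g, hg, he, hg1⟩ := exists_even_isTestFun
  refine ⟨|(|ε| * (L * ∫ y, |y| * |deriv g y|))|, fun s hs t ht => ?_⟩
  have hlim (f : H) : Tendsto (fun c => inner ℝ (mollify T (hg.rescale c).integrable f) f) atTop
      (𝓝 (‖f‖ ^ 2)) := by
    rw [← real_inner_self_eq_norm_sq]
    exact (tendsto_mollify_rescale T hg hg1 f).inner tendsto_const_nhds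
  refine le_of_tendsto ((hlim (Z t)).sub (hlim (Z s))).abs ?_
  filter_upwards [eventually_gt_atTop 0] with c hc
  refine (h.abs_energy_sub_le hlip (hg.rescale c) (rescale_even he c) hs ht).trans_eq ?_
  rw [← abs_mul, ← intervalIntegral.integral_const_mul, integral_abs_mul_abs_deriv_rescale hc]
  simp only [mul_assoc, mul_left_comm, mul_comm]

lemma eq_zero (h : IsMollifiedSol T ε a b Z B)
    (hlip : ∀ t ∈ Icc a b, ∀ s,
      |inner ℝ (T s (B t)) (Z t) - inner ℝ (T (-s) (B t)) (Z t)| ≤ L * ‖Z t‖ ^ 2 * |s|)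
    {t₀ : ℝ} (ht₀ : t₀ ∈ Icc a b) (h0 : Z t₀ = 0) : ∀ t ∈ Icc a b, Z t = 0 := by
  obtain ⟨K, hK⟩ := h.exists_abs_norm_sq_sub_le hlip
  intro t ht
  refine norm_eq_zero.1 (pow_eq_zero_iff two_ne_zero |>.1 (eq_zero_of_le_mul_abs_integral (K := K)
    ht₀ (h.continuousOn.norm.pow 2) (fun r _ => sq_nonneg _) (fun r hr => ?_) t ht))
  simpa [h0] using hK t₀ ht₀ r hr

end IsMollifiedSol

end Energy

/-- The real Hilbert space `L²(ℝ)`. -/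
abbrev L2R : Type := Lp ℝ 2 (volume : Measure ℝ)

lemma inner_eq_integral (f g : L2R) : inner ℝ f g = ∫ x, f x * g x := by
  rw [L2.inner_def]
  exact integral_congr_ae (.of_forall fun x => by simp [mul_comm])

lemma inner_eq_integral_of_ae_eq {f g : L2R} {f' g' : ℝ → ℝ} (hf : f =ᵐ[volume] f')
    (hg : g =ᵐ[volume] g') : inner ℝ f g = ∫ x, f' x * g' x := by
  rw [inner_eq_integral]
  exact integral_congr_ae (hf.mul hg)

lemma integral_sq_eq_norm_sq (f : L2R) : ∫ x, f x ^ 2 = ‖f‖ ^ 2 := by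
  rw [← real_inner_self_eq_norm_sq, inner_eq_integral]
  simp only [sq]

/-- The class in `L²(ℝ)` of a test function. -/
def IsTestFun.toL2 {h : ℝ → ℝ} (hh : IsTestFun univ h) : L2R := (hh.memLp 2).toLp h

lemma inner_toL2 {h : ℝ → ℝ} (hh : IsTestFun univ h) {f : L2R} {f' : ℝ → ℝ}
    (hf : f =ᵐ[volume] f') : inner ℝ f hh.toL2 = ∫ x, f' x * h x :=
  inner_eq_integral_of_ae_eq hf (hh.memLp 2).coeFn_toLp

lemma eq_zero_of_inner_toL2_eq_zero {f : L2R}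
    (h : ∀ k, ∀ hk : IsTestFun univ k, inner ℝ f hk.toL2 = 0) : f = 0 := by
  have hdense := Lp.dense_hasCompactSupport_contDiff (F := ℝ) (μ := (volume : Measure ℝ)) (p := 2)
    ENNReal.ofNat_ne_top
  refine (inner_self_eq_zero (𝕜 := ℝ)).1 (closure_minimal (t := {k : L2R | inner ℝ f k = 0}) ?_
    (isClosed_eq (continuous_const.inner continuous_id) continuous_const) (hdense f))
  rintro k ⟨k', hk, hk', hk'd⟩
  have htest : IsTestFun univ k' := ⟨hk'd, hk', subset_univ _⟩
  have hk_eq : k = htest.toL2 := Lp.ext (hk.trans (htest.memLp 2).coeFn_toLp.symm)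
  exact hk_eq ▸ h k' htest

section Translation

lemma compMeasurePreserving_add_left_ae_eq (s : ℝ) (f : L2R) :
    Lp.compMeasurePreserving (fun x => s + x) (measurePreserving_add_left volume s) f
      =ᵐ[volume] fun x => f (s + x) :=
  Lp.coeFn_compMeasurePreserving f (measurePreserving_add_left volume s)

/-- The translation group `(T(s)f)(x) = f(s + x)` of `L²(ℝ)`. -/
def translation : IsometryGroup L2R where
  toFun s := Lp.compMeasurePreservingₗᵢ ℝ (fun x => s + x) (measurePreserving_add_left volume s)
  zero_apply f := Lp.ext <| by
    filter_upwards [compMeasurePreserving_add_left_ae_eq 0 f] with x hx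
    exact hx.trans (by rw [zero_add])
  add_apply s r f := Lp.ext <| by
    filter_upwards [compMeasurePreserving_add_left_ae_eq (s + r) f,
      compMeasurePreserving_add_left_ae_eq s (Lp.compMeasurePreserving (fun x => r + x)
        (measurePreserving_add_left volume r) f),
      (measurePreserving_add_left volume s).quasiMeasurePreserving.ae
        (compMeasurePreserving_add_left_ae_eq r f)] with x hsr hs hr
    exact hsr.trans ((hs.trans (hr.trans (by rw [← add_assoc, add_comm r]))).symm)
  continuous_apply f :=
    let τ : C(ℝ, C(ℝ, ℝ)) := (ContinuousMap.mk (fun a : ℝ × ℝ => a.1 + a.2) continuous_add).curry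
    (continuous_const (y := f)).compMeasurePreservingLp τ.continuous
      (fun s => measurePreserving_add_left volume s) ENNReal.ofNat_ne_top

lemma translation_ae_eq (s : ℝ) {f : L2R} {f' : ℝ → ℝ} (hf : f =ᵐ[volume] f') :
    translation s f =ᵐ[volume] fun x => f' (s + x) :=
  (compMeasurePreserving_add_left_ae_eq s f).trans
    ((measurePreserving_add_left volume s).quasiMeasurePreserving.ae_eq_comp hf)

lemma inner_translation {f g : L2R} {f' g' : ℝ → ℝ} (s : ℝ) (hf : f =ᵐ[volume] f')
    (hg : g =ᵐ[volume] g') : inner ℝ (translation s f) g = ∫ x, f' (s + x) * g' x :=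
  inner_eq_integral_of_ae_eq (translation_ae_eq s hf) hg

lemma inner_translation_neg {f g : L2R} {f' g' : ℝ → ℝ} (s : ℝ) (hf : f =ᵐ[volume] f')
    (hg : g =ᵐ[volume] g') : inner ℝ (translation (-s) f) g = ∫ x, f' x * g' (s + x) := by
  rw [translation.inner_neg_apply]
  exact inner_eq_integral_of_ae_eq hf (translation_ae_eq s hg)

-- Antisymmetrising in `s` leaves `(A (s + x) - A x) * Z (s + x) * Z x`: no derivative falls on `Z`.
lemma abs_inner_translation_sub_le {A : ℝ → ℝ} {L : ℝ} (hA : ∀ x y, |A x - A y| ≤ L * |x - y|)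
    {Z B : L2R} (hB : B =ᵐ[volume] fun x => A x * Z x) (s : ℝ) :
    |inner ℝ (translation s B) Z - inner ℝ (translation (-s) B) Z| ≤ L * ‖Z‖ ^ 2 * |s| := by
  have hτ := measurePreserving_add_left (volume : Measure ℝ) s
  have hZ : MemLp Z 2 := Lp.memLp Z
  have hAZ : MemLp (fun x => A x * Z x) 2 := (Lp.memLp B).ae_eq hB
  have hZs : MemLp (fun x => Z (s + x)) 2 := hZ.comp_measurePreserving hτ
  have hAZs : MemLp (fun x => A (s + x) * Z (s + x)) 2 := hAZ.comp_measurePreserving hτ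
  have hsum : ∫ x, L * |s| * ((Z (s + x) ^ 2 + Z x ^ 2) / 2) = L * ‖Z‖ ^ 2 * |s| := by
    rw [integral_const_mul, integral_div, integral_add hZs.integrable_sq hZ.integrable_sq,
      integral_add_left_eq_self (fun x => Z x ^ 2) s, integral_sq_eq_norm_sq]
    ring
  have hint₁ : Integrable fun x => A (s + x) * Z (s + x) * Z x := hAZs.integrable_mul hZ
  have hint₂ : Integrable fun x => A x * Z x * Z (s + x) := hAZ.integrable_mul hZs
  rw [inner_translation s hB .rfl, inner_translation_neg s hB .rfl, ← integral_sub hint₁ hint₂,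
    ← Real.norm_eq_abs, ← hsum]
  refine norm_integral_le_of_norm_le
    (((hZs.integrable_sq.add hZ.integrable_sq).div_const 2).const_mul _) (.of_forall fun x => ?_)
  calc ‖A (s + x) * Z (s + x) * Z x - A x * Z x * Z (s + x)‖
      = |A (s + x) - A x| * |Z (s + x) * Z x| := by rw [Real.norm_eq_abs, ← abs_mul]; ring_nf
    _ ≤ L * |s| * ((Z (s + x) ^ 2 + Z x ^ 2) / 2) := by
      have hAs : |A (s + x) - A x| ≤ L * |s| := by
        simpa only [add_sub_cancel_right] using hA (s + x) x
      refine mul_le_mul hAs ?_ (abs_nonneg _) ((abs_nonneg _).trans hAs)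
      rw [abs_mul, ← sq_abs (Z (s + x)), ← sq_abs (Z x)]
      linarith [two_mul_le_add_sq |Z (s + x)| |Z x|]

end Translation

section Convolution

lemma integral_abs_mul_abs_le {f g : ℝ → ℝ} (hf : MemLp f 2) (hg : MemLp g 2) :
    ∫ x, |f x| * |g x| ≤ (∫ x, f x ^ 2) + ∫ x, g x ^ 2 := by
  rw [← integral_add hf.integrable_sq hg.integrable_sq]
  refine integral_mono_of_nonneg (.of_forall fun x => by positivity)
    (hf.integrable_sq.add hg.integrable_sq) (.of_forall fun x => ?_)
  simp only [← sq_abs (f x), ← sq_abs (g x)]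
  nlinarith [two_mul_le_add_sq |f x| |g x|, abs_nonneg (f x), abs_nonneg (g x)]

lemma integrable_mul_mul_comp_sub {κ f k : ℝ → ℝ} (hκ : Integrable κ) (hf : MemLp f 2)
    (hk : MemLp k 2) :
    Integrable (Function.uncurry fun s x => κ s * (f x * k (x - s))) (volume.prod volume) := by
  have hks (s : ℝ) : MemLp (fun x => k (x - s)) 2 :=
    hk.comp_measurePreserving (measurePreserving_sub_right volume s)
  have hmeas : AEStronglyMeasurable (Function.uncurry fun s x => κ s * (f x * k (x - s)))
      (volume.prod volume) := by
    refine hκ.aestronglyMeasurable.comp_fst.mul (hf.aestronglyMeasurable.comp_snd.mul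
      (hk.aestronglyMeasurable.comp_quasiMeasurePreserving (f := fun q : ℝ × ℝ => q.2 - q.1) ?_))
    exact (quasiMeasurePreserving_sub_of_right_invariant volume volume).comp
      Measure.measurePreserving_swap.quasiMeasurePreserving
  refine (integrable_prod_iff hmeas).2
    ⟨.of_forall fun s => (hf.integrable_mul (hks s)).const_mul (κ s), ?_⟩
  refine (hκ.norm.mul_const ((∫ x, f x ^ 2) + ∫ x, k x ^ 2)).mono'
    hmeas.norm.integral_prod_right' (.of_forall fun s => ?_)
  rw [Real.norm_of_nonneg (integral_nonneg fun x => norm_nonneg _)]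
  simp only [Function.uncurry_apply_pair, norm_mul, Real.norm_eq_abs]
  rw [integral_const_mul]
  gcongr
  refine (integral_abs_mul_abs_le hf (hks s)).trans_eq ?_
  rw [integral_sub_right_eq_self (fun x => k x ^ 2) s]

variable {g k : ℝ → ℝ}

lemma IsTestFun.convolution (hg : IsTestFun univ g) (hk : IsTestFun univ k) :
    IsTestFun univ (convolution g k (ContinuousLinearMap.mul ℝ ℝ) volume) where
  contDiff := hg.hasCompactSupport.contDiff_convolution_left _ hg.contDiff
    hk.continuous.locallyIntegrable
  hasCompactSupport := hg.hasCompactSupport.convolution _ hk.hasCompactSupport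
  tsupport_subset := subset_univ _

lemma deriv_convolution (hg : IsTestFun univ g) (hk : IsTestFun univ k) :
    deriv (convolution g k (ContinuousLinearMap.mul ℝ ℝ) volume)
      = convolution (deriv g) k (ContinuousLinearMap.mul ℝ ℝ) volume :=
  funext fun x => (hg.hasCompactSupport.hasDerivAt_convolution_left (ContinuousLinearMap.mul ℝ ℝ)
    (hg.contDiff.of_le (by exact_mod_cast le_top)) hk.continuous.locallyIntegrable x).deriv

lemma inner_mollify_toL2 (hg : IsTestFun univ g) (hk : IsTestFun univ k) (f : L2R) :
    inner ℝ (mollify translation hg.integrable f) hk.toL2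
      = inner ℝ f (hg.convolution hk).toL2 := by
  have hshift (s : ℝ) : g s * inner ℝ (translation s f) hk.toL2
      = ∫ x, g s * (f x * k (x - s)) := by
    rw [inner_toL2 hk (translation_ae_eq s .rfl), integral_const_mul,
      ← integral_add_left_eq_self (fun x => f x * k (x - s)) s]
    simp only [add_sub_cancel_left]
  rw [inner_mollify, inner_toL2 _ .rfl]
  simp only [hshift]
  rw [integral_integral_swap
    (integrable_mul_mul_comp_sub hg.integrable (Lp.memLp f) (hk.memLp 2))]
  simp only [convolution_def, ContinuousLinearMap.mul_apply', ← integral_const_mul,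
    mul_left_comm (g _)]

end Convolution

/-- `Z` solves `∂ₜ Z + ∂ₓ³ Z + ε ∂ₓ B = 0` on `[a, b]`, integrated in time and tested against
functions of `x` only, for continuous curves `Z` and `B` in `L²(ℝ)`. -/
structure IsWeakSol (ε a b : ℝ) (Z B : ℝ → L2R) : Prop where
  continuousOn : ContinuousOn Z (Icc a b)
  continuousOn_nonlinearity : ContinuousOn B (Icc a b)
  inner_sub : ∀ {h : ℝ → ℝ} (hh : IsTestFun univ h) {s t : ℝ}, s ∈ Icc a b → t ∈ Icc a b →
    inner ℝ (Z t) hh.toL2 - inner ℝ (Z s) hh.toL2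
      = ∫ r in s..t, (inner ℝ (Z r) hh.deriv.deriv.deriv.toL2 + ε * inner ℝ (B r) hh.deriv.toL2)

namespace IsWeakSol

variable {ε a b : ℝ} {Z B Z' B' : ℝ → L2R}

lemma continuousOn_rhs (hZ : ContinuousOn Z (Icc a b)) (hB : ContinuousOn B (Icc a b)) {h : ℝ → ℝ}
    (hh : IsTestFun univ h) :
    ContinuousOn (fun r => inner ℝ (Z r) hh.deriv.deriv.deriv.toL2
      + ε * inner ℝ (B r) hh.deriv.toL2) (Icc a b) :=
  (hZ.inner continuousOn_const).add (continuousOn_const.mul (hB.inner continuousOn_const))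

lemma sub (h : IsWeakSol ε a b Z B) (h' : IsWeakSol ε a b Z' B') :
    IsWeakSol ε a b (fun t => Z t - Z' t) fun t => B t - B' t where
  continuousOn := h.continuousOn.sub h'.continuousOn
  continuousOn_nonlinearity := h.continuousOn_nonlinearity.sub h'.continuousOn_nonlinearity
  inner_sub hh s t hs ht := by
    have hst := uIcc_subset_Icc hs ht
    calc inner ℝ (Z t - Z' t) hh.toL2 - inner ℝ (Z s - Z' s) hh.toL2
        = (inner ℝ (Z t) hh.toL2 - inner ℝ (Z s) hh.toL2)
          - (inner ℝ (Z' t) hh.toL2 - inner ℝ (Z' s) hh.toL2) := by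
          simp only [inner_sub_left]
          ring
      _ = _ := by
        rw [h.inner_sub hh hs ht, h'.inner_sub hh hs ht, ← intervalIntegral.integral_sub
          ((continuousOn_rhs h.continuousOn h.continuousOn_nonlinearity hh).mono
            hst).intervalIntegrable
          ((continuousOn_rhs h'.continuousOn h'.continuousOn_nonlinearity hh).mono
            hst).intervalIntegrable]
        refine intervalIntegral.integral_congr fun r _ => ?_
        simp only [inner_sub_left]
        ring

lemma isMollifiedSol (h : IsWeakSol ε a b Z B) : IsMollifiedSol translation ε a b Z B where
  continuousOn := h.continuousOn
  continuousOn_nonlinearity := h.continuousOn_nonlinearity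
  mollify_sub {g} hg s t hs ht := by
    have hV : IntervalIntegrable (fun r =>
        mollify translation hg.deriv.deriv.deriv.integrable (Z r)
          + ε • mollify translation hg.deriv.integrable (B r)) volume s t :=
      ((((mollify _ _).continuous.comp_continuousOn h.continuousOn).add
        (((mollify _ _).continuous.comp_continuousOn h.continuousOn_nonlinearity).const_smul
          ε)).mono (uIcc_subset_Icc hs ht)).intervalIntegrable
    refine sub_eq_zero.1 (eq_zero_of_inner_toL2_eq_zero fun k hk => ?_)
    have hweak := h.inner_sub (hg.convolution hk) hs ht
    simp only [deriv_convolution hg hk, deriv_convolution hg.deriv hk,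
      deriv_convolution hg.deriv.deriv hk] at hweak
    have hcomm := (innerSL ℝ hk.toL2).intervalIntegral_comp_comm hV
    simp only [innerSL_apply_apply, real_inner_comm _ hk.toL2, inner_add_left,
      real_inner_smul_left, inner_mollify_toL2 hg.deriv.deriv.deriv hk,
      inner_mollify_toL2 hg.deriv hk] at hcomm
    rw [inner_sub_left, inner_sub_left, inner_mollify_toL2 hg hk, inner_mollify_toL2 hg hk, hweak,
      ← hcomm, sub_self]

end IsWeakSol

/-- `U : I → L²(ℝ)` is a continuous curve representing the family of functions `u`. -/
structure IsL2Lift (I : Set ℝ) (U : ℝ → L2R) (u : ℝ → ℝ → ℝ) : Prop where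
  continuousOn : ContinuousOn U I
  ae_eq : ∀ t ∈ I, U t =ᵐ[volume] u t

lemma ContInL2.exists_isL2Lift {I : Set ℝ} {u : ℝ → ℝ → ℝ} (hu : ContInL2 I u) :
    ∃ U, IsL2Lift I U u := by
  classical
  refine ⟨fun t => if h : t ∈ I then (hu.1 t h).toLp else 0, fun t ht => ?_, fun t ht => ?_⟩
  · rw [ContinuousWithinAt, tendsto_iff_edist_tendsto_0]
    refine (hu.2 t ht).congr' ?_
    filter_upwards [self_mem_nhdsWithin] with s hs
    rw [dif_pos hs, dif_pos ht, Lp.edist_toLp_toLp]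
    rfl
  · simp only [dif_pos ht]
    exact MemLp.coeFn_toLp _

lemma abs_cube_sub_le {a b C : ℝ} (ha : |a| ≤ C) (hb : |b| ≤ C) :
    |a ^ 3 - b ^ 3| ≤ 3 * C ^ 2 * |a - b| := by
  have hfactor : a ^ 3 - b ^ 3 = (a ^ 2 + a * b + b ^ 2) * (a - b) := by ring
  rw [hfactor, abs_mul]
  gcongr
  calc |a ^ 2 + a * b + b ^ 2| ≤ |a ^ 2| + |a * b| + |b ^ 2| := abs_add_three _ _ _
    _ = |a| ^ 2 + |a| * |b| + |b| ^ 2 := by rw [abs_pow, abs_pow, abs_mul]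
    _ ≤ C ^ 2 + C * C + C ^ 2 := by gcongr; exact (abs_nonneg a).trans ha
    _ = 3 * C ^ 2 := by ring

lemma ContInL2.cube {I : Set ℝ} {u : ℝ → ℝ → ℝ} (hu : ContInL2 I u) {C : ℝ}
    (hC : ∀ t ∈ I, ∀ x, |u t x| ≤ C) : ContInL2 I fun t x => u t x ^ 3 := by
  refine ⟨fun t ht => ?_, fun t ht => ?_⟩
  · refine (hu.1 t ht).of_le_mul (c := 3 * C ^ 2) ((hu.1 t ht).aestronglyMeasurable.pow 3)
      (.of_forall fun x => ?_)
    simpa using abs_cube_sub_le (hC t ht x) (abs_zero.trans_le ((abs_nonneg _).trans (hC t ht x)))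
  · have hlim : Tendsto (fun s => ENNReal.ofReal (3 * C ^ 2) *
        eLpNorm (fun x => u s x - u t x) 2 (volume : Measure ℝ)) (𝓝[I] t) (𝓝 0) := by
      simpa only [mul_zero] using ENNReal.Tendsto.const_mul (a := ENNReal.ofReal (3 * C ^ 2))
        (hu.2 t ht) (.inr ENNReal.ofReal_ne_top)
    refine tendsto_of_tendsto_of_tendsto_of_le_of_le' tendsto_const_nhds hlim
      (.of_forall fun s => zero_le) ?_
    filter_upwards [self_mem_nhdsWithin] with s hs
    exact eLpNorm_le_mul_eLpNorm_of_ae_le_mul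
      (.of_forall fun x => abs_cube_sub_le (hC s hs x) (hC t ht x)) 2

lemma IsSolOn.isWeakSol {ε a b A C : ℝ} {S : ESol (Icc a b)} (hS : IsSolOn ε S.u (Icc a b))
    (hA : ∀ t ∈ Icc a b, ∀ p, ‖S.w t p‖ ≤ A) (hC : ∀ t ∈ Icc a b, ∀ x, |S.u t x| ≤ C)
    {U U₃ : ℝ → L2R} (hU : IsL2Lift (Icc a b) U S.u)
    (hU₃ : IsL2Lift (Icc a b) U₃ fun t x => S.u t x ^ 3) : IsWeakSol ε a b U U₃ where
  continuousOn := hU.continuousOn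
  continuousOn_nonlinearity := hU₃.continuousOn
  inner_sub {h} hh s t hs ht := by
    refine sub_eq_integral_of_weak_deriv (hU.continuousOn.inner continuousOn_const)
      (IsWeakSol.continuousOn_rhs hU.continuousOn hU₃.continuousOn hh) (fun η hη => ?_) hs ht
    rw [← hS.integral_time_eq_zero (S.aestronglyMeasurable hA) hC
      (η := η) (by rwa [interior_Icc]) hh]
    refine integral_congr_ae (.of_forall fun r => ?_)
    by_cases hr : r ∈ Icc a b
    · simp only [inner_toL2 _ (hU.ae_eq r hr), inner_toL2 _ (hU₃.ae_eq r hr)]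
    · have hr' : r ∉ Ioo a b := fun h => hr (Ioo_subset_Icc_self h)
      simp only [hη.eq_zero_of_notMem hr', hη.deriv.eq_zero_of_notMem hr', zero_mul]

lemma IsSolOn.exists_isWeakSol {ε a b A C : ℝ} {S : ESol (Icc a b)} (hS : IsSolOn ε S.u (Icc a b))
    (hL2 : ContInL2 (Icc a b) S.u) (hA : ∀ t ∈ Icc a b, ∀ p, ‖S.w t p‖ ≤ A)
    (hC : ∀ t ∈ Icc a b, ∀ x, |S.u t x| ≤ C) :
    ∃ U U₃, IsL2Lift (Icc a b) U S.u ∧ IsL2Lift (Icc a b) U₃ (fun t x => S.u t x ^ 3)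
      ∧ IsWeakSol ε a b U U₃ := by
  obtain ⟨U, hU⟩ := hL2.exists_isL2Lift
  obtain ⟨U₃, hU₃⟩ := (hL2.cube hC).exists_isL2Lift
  exact ⟨U, U₃, hU, hU₃, hS.isWeakSol hA hC hU hU₃⟩

lemma IsL2Lift.sub_ae_eq {I : Set ℝ} {U V : ℝ → L2R} {u v : ℝ → ℝ → ℝ} (hU : IsL2Lift I U u)
    (hV : IsL2Lift I V v) {t : ℝ} (ht : t ∈ I) :
    ⇑(U t - V t) =ᵐ[volume] fun x => u t x - v t x :=
  (Lp.coeFn_sub _ _).trans ((hU.ae_eq t ht).sub (hV.ae_eq t ht))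

lemma IsPhys.abs_sq_add_mul_add_sq_sub_le {w z : ℝ → ℂ} {u v : ℝ → ℝ} {c A t : ℝ}
    (hu : IsPhys w t u) (hv : IsPhys z t v) (hw : IsBoundedProfile A w)
    (hz : IsBoundedProfile A z) (hc : 0 < c) (hc1 : c ≤ 1) (hct : c ≤ t) (x y : ℝ) :
    |(u x ^ 2 + u x * v x + v x ^ 2) - (u y ^ 2 + u y * v y + v y ^ 2)|
      ≤ 6 * dispConst c A ^ 2 * |x - y| := by
  calc |(u x ^ 2 + u x * v x + v x ^ 2) - (u y ^ 2 + u y * v y + v y ^ 2)|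
      = |(u x * u x - u y * u y) + (u x * v x - u y * v y) + (v x * v x - v y * v y)| := by
        ring_nf
    _ ≤ |u x * u x - u y * u y| + |u x * v x - u y * v y| + |v x * v x - v y * v y| :=
        abs_add_three _ _ _
    _ ≤ 6 * dispConst c A ^ 2 * |x - y| := by
        linarith [hu.abs_mul_sub_mul_le hu hw hw hc hc1 hct x y,
          hu.abs_mul_sub_mul_le hv hw hz hc hc1 hct x y,
          hv.abs_mul_sub_mul_le hv hz hz hc hc1 hct x y]

theorem mkdv_backward_uniqueness_L2_general (ε t₁ t₂ : ℝ) (ht₁ : 0 < t₁)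
    (u v : ESol (Icc t₁ t₂))
    (hu : IsSolOn ε u.u (Icc t₁ t₂)) (hv : IsSolOn ε v.u (Icc t₁ t₂))
    (hufin : FiniteEnorm (Icc t₁ t₂) u) (hvfin : FiniteEnorm (Icc t₁ t₂) v)
    (huL2 : ContInL2 (Icc t₁ t₂) u.u) (hvL2 : ContInL2 (Icc t₁ t₂) v.u)
    {t₀ : ℝ} (ht₀ : t₀ ∈ Icc t₁ t₂) (hagree : u.u t₀ = v.u t₀) :
    ∀ t ∈ Icc t₁ t₂, u.u t = v.u t := by
  obtain ⟨Au, hAu⟩ := hufin.exists_isBoundedProfile ht₁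
  obtain ⟨Av, hAv⟩ := hvfin.exists_isBoundedProfile ht₁
  have hwu (t) (ht : t ∈ Icc t₁ t₂) := (hAu t ht).mono (le_max_left Au Av)
  have hwv (t) (ht : t ∈ Icc t₁ t₂) := (hAv t ht).mono (le_max_right Au Av)
  obtain ⟨c, hc, hc1, hct⟩ : ∃ c, 0 < c ∧ c ≤ 1 ∧ ∀ t ∈ Icc t₁ t₂, c ≤ t :=
    ⟨min 1 t₁, lt_min one_pos ht₁, min_le_left _ _, fun t ht => (min_le_right _ _).trans ht.1⟩
  obtain ⟨U, U₃, hU, hU₃, hUweak⟩ := hu.exists_isWeakSol huL2 (fun t ht => (hwu t ht).norm_le)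
    fun t ht => (u.isPhys t ht).abs_le (hwu t ht) hc hc1 (hct t ht)
  obtain ⟨V, V₃, hV, hV₃, hVweak⟩ := hv.exists_isWeakSol hvL2 (fun t ht => (hwv t ht).norm_le)
    fun t ht => (v.isPhys t ht).abs_le (hwv t ht) hc hc1 (hct t ht)
  have hcube (t) (ht : t ∈ Icc t₁ t₂) : ⇑(U₃ t - V₃ t) =ᵐ[volume] fun x =>
      (u.u t x ^ 2 + u.u t x * v.u t x + v.u t x ^ 2) * (U t - V t : L2R) x := by
    filter_upwards [hU₃.sub_ae_eq hV₃ ht, hU.sub_ae_eq hV ht] with x h₃ h₁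
    rw [h₃, h₁]
    ring
  have hzero : U t₀ - V t₀ = 0 := sub_eq_zero.2 <| Lp.ext <|
    (hU.ae_eq t₀ ht₀).trans (hagree ▸ (hV.ae_eq t₀ ht₀).symm)
  have heq := (hUweak.sub hVweak).isMollifiedSol.eq_zero (fun t ht => abs_inner_translation_sub_le
    ((u.isPhys t ht).abs_sq_add_mul_add_sq_sub_le (v.isPhys t ht) (hwu t ht) (hwv t ht) hc hc1
      (hct t ht)) (hcube t ht)) ht₀ hzero
  intro t ht
  refine (Continuous.ae_eq_iff_eq volume ((u.isPhys t ht).continuous (hwu t ht) (ht₁.trans_le ht.1))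
    ((v.isPhys t ht).continuous (hwv t ht) (ht₁.trans_le ht.1))).1 ?_
  exact (hU.ae_eq t ht).symm.trans (sub_eq_zero.1 (heq t ht) ▸ hV.ae_eq t ht)

/-- backward uniqueness with `L²` integrability. -/
theorem mkdv_backward_uniqueness_L2 (ε : ℝ) (hε : ε = 1 ∨ ε = -1)
    (t₁ t₂ : ℝ) (ht₁ : 0 < t₁) (ht₁₂ : t₁ < t₂)
    (u v : ESol (Icc t₁ t₂))
    (hu : IsSolOn ε u.u (Icc t₁ t₂)) (hv : IsSolOn ε v.u (Icc t₁ t₂))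
    (hufin : FiniteEnorm (Icc t₁ t₂) u) (hvfin : FiniteEnorm (Icc t₁ t₂) v)
    (huL2 : ContInL2 (Icc t₁ t₂) u.u) (hvL2 : ContInL2 (Icc t₁ t₂) v.u)
    (hfinal : u.u t₂ = v.u t₂) :
    ∀ t ∈ Icc t₁ t₂, u.u t = v.u t :=
  mkdv_backward_uniqueness_L2_general ε t₁ t₂ ht₁ u v hu hv hufin hvfin huL2 hvL2
    (right_mem_Icc.2 ht₁₂.le) hfinal

end MKdVPaper
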